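/- arXiv:1204.4694 — 2 statements merged into one kernel-verified Lean document; each statement's English description precedes it below -/
import Mathlib

section
/- Let φ_k : D → D be a sequence of orientation-preserving homeomorphisms of the closed unit disk, each fixing the origin, converging uniformly (in the C⁰ sense) to a homeomorphism φ : D → D fixing the origin. Assume: (1) for each k there exists an orientation-preserving homeomorphism g_k : D → D fixing the origin and a real number θ_k such that φ_k = g_k⁻¹ ∘ R_{2πθ_k} ∘ g_k; and (2) θ_k → θ as k → ∞, where θ is irrational. Then φ has no periodic points in D ∖ {0}. -/
open Complex Metric Filter Set

/-- The closed unit disk in `ℂ ≅ ℝ²`. -/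
def Disk : Set ℂ := Metric.closedBall 0 1

/-- A homeomorphism of the closed unit disk: a continuous bijection of `Disk`
with continuous inverse. -/
structure DiskHomeo where
  toFun : ℂ → ℂ
  invFun : ℂ → ℂ
  mapsTo : Set.MapsTo toFun Disk Disk
  mapsTo_inv : Set.MapsTo invFun Disk Disk
  left_inv : ∀ z ∈ Disk, invFun (toFun z) = z
  right_inv : ∀ z ∈ Disk, toFun (invFun z) = z
  cont : ContinuousOn toFun Disk
  cont_inv : ContinuousOn invFun Disk

/-- A homeomorphism of the disk is orientation preserving if its restriction to the
boundary circle has topological degree `+1`, i.e. it admits a continuous strictly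
increasing lift `F : ℝ → ℝ` with `F (x+1) = F x + 1`. -/
def OrientationPreserving (h : DiskHomeo) : Prop :=
  ∃ F : ℝ → ℝ, Continuous F ∧ StrictMono F ∧ (∀ x, F (x + 1) = F x + 1) ∧
    ∀ x : ℝ, h.toFun (Complex.exp ((2 * Real.pi * x) * Complex.I)) =
      Complex.exp ((2 * Real.pi * F x) * Complex.I)

/-!
Suppose `φⁿ z = z` with `z ≠ 0`, and let `f = φ_kⁿ`, which `g_k` conjugates to the rotation by
`τ = n θ_k`. On a convex neighbourhood `U` of `z` missing the origin, `g_k = exp (2πiΛ)` for a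
continuous `Λ`. Along `U`, the map `f` is a translation `Λ ↦ Λ + t` with `t ≡ τ` modulo `1`; so
`f^m` is the translation by `m t`, and as `τ` stays away from the integers, `|m t| > 1` for some `m`
independent of `k`. For large `k`, the point `f^m z` is so close to `z` that `Λ` has a horizontal
chord of length `|m t|` over a small compact convex `W ∋ z` with `f^m W ⊆ U`. By Hopf's chord
theorem, `Λ` then has over `W` a chord of length `1` or one of length `|m t| - 1`, and the latter
becomes a chord of length `1` over `U` after applying `f^m` to one endpoint. But a chord of length
`1` gives two distinct points with the same value of `g_k`.
-/

open scoped Topology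

section ContinuousLogarithm

variable {X E : Type*} [TopologicalSpace X] [NormedAddCommGroup E] [NormedSpace ℝ E]

lemma locallyPathConnectedSpace_of_convex {S : Set E} (hS : Convex ℝ S) :
    LocallyPathConnectedSpace S := by
  refine .of_bases (fun x : S => nhds_basis_ball) fun x r hr => ?_
  have hpath : IsPathConnected (ball (x : E) r ∩ S) :=
    ((convex_ball _ _).inter hS).isPathConnected ⟨x, mem_ball_self hr, x.2⟩
  have hball : Subtype.val '' ball x r = ball (x : E) r ∩ S := by
    rw [← Subtype.preimage_ball, Subtype.image_preimage_coe, inter_comm]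
  rwa [Topology.IsInducing.subtypeVal.isPathConnected_iff, hball]

lemma exists_continuousOn_exp_eqOn_of_convex {S : Set E} (hS : Convex ℝ S) {f : E → ℂ}
    (hf : ContinuousOn f S) (hne : ∀ x ∈ S, f x ≠ 0) {x₀ : E} (hx₀ : x₀ ∈ S) {e₀ : ℂ}
    (he₀ : exp e₀ = f x₀) :
    ∃ L : E → ℂ, ContinuousOn L S ∧ L x₀ = e₀ ∧ EqOn (fun x => exp (L x)) f S := by
  have := hS.contractibleSpace ⟨x₀, hx₀⟩
  have := locallyPathConnectedSpace_of_convex hS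
  obtain ⟨F, ⟨hF₀, hF⟩, -⟩ := isCoveringMapOn_exp.existsUnique_continuousMap_lifts
    ⟨S.domRestrict f, hf.domRestrict⟩ (a₀ := ⟨x₀, hx₀⟩) he₀ fun x => hne x x.2
  have hext (x : S) : Function.extend Subtype.val F 0 x = F x :=
    Subtype.val_injective.extend_apply F 0 x
  refine ⟨Function.extend Subtype.val F 0, ?_, (hext ⟨x₀, hx₀⟩).trans hF₀, fun x hx => ?_⟩
  · rw [continuousOn_iff_continuous_domRestrict]
    exact F.continuous.congr fun x => (hext x).symm
  · exact (congrArg exp (hext ⟨x, hx⟩)).trans (congrFun hF ⟨x, hx⟩)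

lemma eqOn_of_exp_eqOn {S : Set X} (hS : IsPreconnected S) {L₁ L₂ : X → ℂ}
    (hL₁ : ContinuousOn L₁ S) (hL₂ : ContinuousOn L₂ S)
    (hexp : EqOn (fun x => exp (L₁ x)) (fun x => exp (L₂ x)) S)
    {x₀ : X} (hx₀ : x₀ ∈ S) (heq : L₁ x₀ = L₂ x₀) : EqOn L₁ L₂ S :=
  isCoveringMap_exp.eqOn_of_comp_eqOn hS hL₁ hL₂ (fun _ hx => Subtype.ext (hexp hx)) hx₀ heq

lemma im_nonneg_of_exp_im_nonneg {S : Set X} (hS : IsPreconnected S) {L : X → ℂ}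
    (hL : ContinuousOn L S) {x₀ : X} (hx₀ : x₀ ∈ S) (h₀ : 0 ≤ (L x₀).im)
    (hexp : ∀ x ∈ S, 0 ≤ (exp (L x)).im) : ∀ x ∈ S, 0 ≤ (L x).im := by
  intro x hx
  by_contra! hneg
  have hlevel : max (L x).im (-(Real.pi / 2)) ∈ Icc (L x).im (L x₀).im :=
    ⟨le_max_left _ _, max_le (hneg.le.trans h₀) (by linarith [Real.pi_pos])⟩
  obtain ⟨y, hy, hyL⟩ := hS.intermediate_value hx hx₀ (continuous_im.comp_continuousOn hL) hlevel
  have hsin : Real.sin (L y).im < 0 := Real.sin_neg_of_neg_of_neg_pi_lt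
    (hyL.trans_lt (max_lt hneg (by linarith [Real.pi_pos])))
    ((lt_max_of_lt_right (by linarith [Real.pi_pos])).trans_eq hyL.symm)
  have hexpy := hexp y hy
  rw [exp_im] at hexpy
  exact (mul_neg_of_pos_of_neg (Real.exp_pos _) hsin).not_ge hexpy

lemma im_nonpos_of_exp_im_nonpos {S : Set X} (hS : IsPreconnected S) {L : X → ℂ}
    (hL : ContinuousOn L S) {x₀ : X} (hx₀ : x₀ ∈ S) (h₀ : (L x₀).im ≤ 0)
    (hexp : ∀ x ∈ S, (exp (L x)).im ≤ 0) : ∀ x ∈ S, (L x).im ≤ 0 := by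
  have hconj := im_nonneg_of_exp_im_nonneg hS (continuous_conj.comp_continuousOn hL) hx₀
    (by simpa using h₀) fun x hx => by
      simpa only [Function.comp_apply, exp_conj, conj_im, neg_nonneg] using hexp x hx
  simpa using hconj

lemma exp_ne_neg_exp_of_im_eq {u v : ℂ} (h : u.im = v.im) : exp u ≠ -exp v := by
  intro heq
  have hexp : exp (u - v) = -1 := by
    rw [exp_sub, heq, neg_div, div_self (exp_ne_zero v)]
  have hre := congrArg re hexp
  rw [exp_re, sub_im, h, sub_self, Real.cos_zero, mul_one, neg_re, one_re] at hre
  linarith [Real.exp_pos (u - v).re]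

end ContinuousLogarithm

section HopfChordTheorem

variable {X E : Type*}

/-- The map `Λ` has a horizontal chord of signed length `a` over `V`. -/
def HasChord (Λ : X → ℂ) (V : Set X) (a : ℝ) : Prop :=
  ∃ x ∈ V, ∃ y ∈ V, Λ y - Λ x = a

lemma HasChord.mono {Λ : X → ℂ} {V U : Set X} {a : ℝ} (h : HasChord Λ V a) (hVU : V ⊆ U) :
    HasChord Λ U a := by
  obtain ⟨x, hx, y, hy, hxy⟩ := h
  exact ⟨x, hVU hx, y, hVU hy, hxy⟩

lemma HasChord.abs {Λ : X → ℂ} {V : Set X} {a : ℝ} (h : HasChord Λ V a) : HasChord Λ V |a| := by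
  obtain ⟨x, hx, y, hy, hxy⟩ := h
  rcases abs_choice a with ha | ha <;> rw [ha]
  · exact ⟨x, hx, y, hy, hxy⟩
  · exact ⟨y, hy, x, hx, by rw [ofReal_neg, ← hxy, neg_sub]⟩

/-- Applying `f` to the endpoint that lags behind in the direction of `t` turns the chord length
`|t| - s` into `s`. -/
lemma HasChord.of_translation {Λ : X → ℂ} {W U : Set X} (hWU : W ⊆ U) {f : X → X}
    (hf : MapsTo f W U) {s t : ℝ} (hΛ : ∀ x ∈ W, Λ (f x) = Λ x + t)
    (h : HasChord Λ W (|t| - s)) : HasChord Λ U s := by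
  obtain ⟨x, hx, y, hy, hxy⟩ := h
  push_cast at hxy
  rcases abs_choice t with ht | ht <;> rw [ht] at hxy
  · exact ⟨y, hWU hy, f x, hf hx, by linear_combination hΛ x hx - hxy⟩
  · refine ⟨f y, hf hy, x, hWU hx, ?_⟩
    push_cast at hxy
    linear_combination -hΛ y hy - hxy

variable [TopologicalSpace X] [NormedAddCommGroup E] [NormedSpace ℝ E]

/-- A continuous logarithm on `V × V` of `a` minus the difference of the values of `Λ`, with
argument `0` on the diagonal. It exists when `Λ` has no chord of length `a` over `V`, and its
imaginary part measures how the difference winds around `a`. -/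
structure IsChordLog (L : X × X → ℂ) (Λ : X → ℂ) (V : Set X) (a : ℝ) : Prop where
  continuousOn : ContinuousOn L (V ×ˢ V)
  exp_eq : ∀ p ∈ V ×ˢ V, exp (L p) = a - (Λ p.2 - Λ p.1)
  im_diag : ∀ x ∈ V, (L (x, x)).im = 0

namespace IsChordLog

variable {L : X × X → ℂ} {Λ : X → ℂ} {V : Set X} {a : ℝ}

lemma im_exp (h : IsChordLog L Λ V a) {p : X × X} (hp : p ∈ V ×ˢ V) :
    (exp (L p)).im = (Λ p.1).im - (Λ p.2).im := by
  simp [h.exp_eq p hp]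

lemma im_nonneg (h : IsChordLog L Λ V a) {T : Set (X × X)} (hT : IsPreconnected T)
    (hTV : T ⊆ V ×ˢ V) {x : X} (hx : (x, x) ∈ T) (hΛ : ∀ p ∈ T, (Λ p.2).im ≤ (Λ p.1).im) :
    ∀ p ∈ T, 0 ≤ (L p).im :=
  im_nonneg_of_exp_im_nonneg hT (h.continuousOn.mono hTV) hx (h.im_diag x (hTV hx).1).ge
    fun p hp => by simpa [h.im_exp (hTV hp)] using hΛ p hp

lemma im_nonpos (h : IsChordLog L Λ V a) {T : Set (X × X)} (hT : IsPreconnected T)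
    (hTV : T ⊆ V ×ˢ V) {x : X} (hx : (x, x) ∈ T) (hΛ : ∀ p ∈ T, (Λ p.1).im ≤ (Λ p.2).im) :
    ∀ p ∈ T, (L p).im ≤ 0 :=
  im_nonpos_of_exp_im_nonpos hT (h.continuousOn.mono hTV) hx (h.im_diag x (hTV hx).1).le
    fun p hp => by simpa [h.im_exp (hTV hp)] using hΛ p hp

/-- For chord logarithms of lengths `a` and `b`, the difference of the arguments along the path
`x ↦ ((x, w), (z, x))` cannot keep a constant sign, since it has opposite signs at the lowest and at
the highest point of `Λ`. -/
lemma exists_im_eq {A B : X × X → ℂ} {b : ℝ} (hA : IsChordLog A Λ V a) (hB : IsChordLog B Λ V b)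
    (hV : IsPreconnected V) (hVc : IsCompact V) (hΛ : ContinuousOn Λ V) {z w : X} (hz : z ∈ V)
    (hw : w ∈ V) : ∃ x ∈ V, (A (x, w)).im = (B (z, x)).im := by
  have hΛim : ContinuousOn (fun x => (Λ x).im) V := continuous_im.comp_continuousOn hΛ
  obtain ⟨p, hp, hpmin⟩ := hVc.exists_isMinOn ⟨z, hz⟩ hΛim
  obtain ⟨q, hq, hqmax⟩ := hVc.exists_isMaxOn ⟨z, hz⟩ hΛim
  have hrow (x : X) : IsPreconnected ({x} ×ˢ V) := isPreconnected_singleton.prod hV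
  have hcol (x : X) : IsPreconnected (V ×ˢ {x}) := hV.prod isPreconnected_singleton
  have hrowV {x : X} (hx : x ∈ V) : {x} ×ˢ V ⊆ V ×ˢ V :=
    prod_mono_left (singleton_subset_iff.2 hx)
  have hcolV {x : X} (hx : x ∈ V) : V ×ˢ {x} ⊆ V ×ˢ V :=
    prod_mono_right (singleton_subset_iff.2 hx)
  have hAp : (A (p, w)).im ≤ 0 := hA.im_nonpos (hrow p) (hrowV hp) ⟨rfl, hp⟩
    (by rintro ⟨_, y⟩ ⟨rfl, hy⟩; exact hpmin hy) _ ⟨rfl, hw⟩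
  have hBp : 0 ≤ (B (z, p)).im := hB.im_nonneg (hcol p) (hcolV hp) ⟨hp, rfl⟩
    (by rintro ⟨y, _⟩ ⟨hy, rfl⟩; exact hpmin hy) _ ⟨hz, rfl⟩
  have hAq : 0 ≤ (A (q, w)).im := hA.im_nonneg (hrow q) (hrowV hq) ⟨rfl, hq⟩
    (by rintro ⟨_, y⟩ ⟨rfl, hy⟩; exact hqmax hy) _ ⟨rfl, hw⟩
  have hBq : (B (z, q)).im ≤ 0 := hB.im_nonpos (hcol q) (hcolV hq) ⟨hq, rfl⟩
    (by rintro ⟨y, _⟩ ⟨hy, rfl⟩; exact hqmax hy) _ ⟨hz, rfl⟩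
  have hAcont : ContinuousOn (fun x => (A (x, w)).im) V := continuous_im.comp_continuousOn
    (hA.continuousOn.comp (by fun_prop) fun x hx => ⟨hx, hw⟩)
  have hBcont : ContinuousOn (fun x => (B (z, x)).im) V := continuous_im.comp_continuousOn
    (hB.continuousOn.comp (by fun_prop) fun x hx => ⟨hz, hx⟩)
  exact hV.intermediate_value₂ hp hq hAcont hBcont (hAp.trans hBp) (hBq.trans hAq)

end IsChordLog

lemma exists_isChordLog {V : Set E} (hV : Convex ℝ V) {Λ : E → ℂ} (hΛ : ContinuousOn Λ V)
    (hne : V.Nonempty) {a : ℝ} (ha : 0 < a) (hchord : ¬ HasChord Λ V a) :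
    ∃ L, IsChordLog L Λ V a := by
  obtain ⟨z, hz⟩ := hne
  have hcont : ContinuousOn (fun p : E × E => (a : ℂ) - (Λ p.2 - Λ p.1)) (V ×ˢ V) :=
    continuousOn_const.sub ((hΛ.comp continuousOn_snd fun _ hp => hp.2).sub
      (hΛ.comp continuousOn_fst fun _ hp => hp.1))
  have hne_zero : ∀ p ∈ V ×ˢ V, (a : ℂ) - (Λ p.2 - Λ p.1) ≠ 0 := fun p hp h =>
    hchord ⟨p.1, hp.1, p.2, hp.2, (sub_eq_zero.1 h).symm⟩
  have hlog : exp (Real.log a : ℂ) = a := by rw [← ofReal_exp, Real.exp_log ha]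
  obtain ⟨L, hL, hLz, hexp⟩ := exists_continuousOn_exp_eqOn_of_convex (hV.prod hV) hcont hne_zero
    (x₀ := (z, z)) ⟨hz, hz⟩ (e₀ := Real.log a) (by rw [hlog, sub_self, sub_zero])
  have hdiag : EqOn (fun x => L (x, x)) (fun _ => (Real.log a : ℂ)) V :=
    eqOn_of_exp_eqOn hV.isPreconnected (hL.comp (by fun_prop) fun x hx => ⟨hx, hx⟩)
      continuousOn_const
      (fun x hx => (hexp (x := (x, x)) ⟨hx, hx⟩).trans (by simp [hlog])) hz hLz
  exact ⟨L, hL, hexp, fun x hx => (congrArg im (hdiag hx)).trans (ofReal_im _)⟩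

/-- **Hopf's chord theorem**. -/
theorem HasChord.of_add {V : Set E} (hV : Convex ℝ V) (hVc : IsCompact V) {Λ : E → ℂ}
    (hΛ : ContinuousOn Λ V) {a b : ℝ} (ha : 0 < a) (hb : 0 < b) (h : HasChord Λ V (a + b)) :
    HasChord Λ V a ∨ HasChord Λ V b := by
  obtain ⟨z, hz, w, hw, hzw⟩ := h
  by_contra! hno
  obtain ⟨A, hA⟩ := exists_isChordLog hV hΛ ⟨z, hz⟩ ha hno.1
  obtain ⟨B, hB⟩ := exists_isChordLog hV hΛ ⟨z, hz⟩ hb hno.2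
  obtain ⟨x, hx, him⟩ := hA.exists_im_eq hB hV.isPreconnected hVc hΛ hz hw
  refine exp_ne_neg_exp_of_im_eq him ?_
  rw [hA.exp_eq _ ⟨hx, hw⟩, hB.exp_eq _ ⟨hz, hx⟩]
  push_cast at hzw
  linear_combination -hzw

end HopfChordTheorem

section RotationCoordinate

variable {X E : Type*} [TopologicalSpace X] [NormedAddCommGroup E] [NormedSpace ℝ E]

/-- The function `Λ` is a continuous choice on `U` of `(2πi)⁻¹ log g`; its real part is the angle of
`g` in turns. -/
structure IsAngleLift (Λ g : X → ℂ) (U : Set X) : Prop where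
  continuousOn : ContinuousOn Λ U
  exp_eq : ∀ x ∈ U, exp (2 * Real.pi * Λ x * I) = g x

lemma exists_isAngleLift {U : Set E} (hU : Convex ℝ U) (hne : U.Nonempty) {g : E → ℂ}
    (hg : ContinuousOn g U) (hg₀ : ∀ x ∈ U, g x ≠ 0) : ∃ Λ, IsAngleLift Λ g U := by
  obtain ⟨z, hz⟩ := hne
  obtain ⟨L, hL, -, hexp⟩ :=
    exists_continuousOn_exp_eqOn_of_convex hU hg hg₀ hz (exp_log (hg₀ z hz))
  refine ⟨fun x => L x / (2 * Real.pi * I), hL.div_const _, fun x hx => (hexp hx).symm ▸ ?_⟩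
  congr 1
  have := two_pi_I_ne_zero
  field_simp

namespace IsAngleLift

variable {Λ g : X → ℂ} {U : Set X}

lemma not_hasChord_one (h : IsAngleLift Λ g U) (hg : InjOn g U) : ¬ HasChord Λ U 1 := by
  rintro ⟨x, hx, y, hy, hxy⟩
  rw [ofReal_one, sub_eq_iff_eq_add'] at hxy
  have hgxy : g y = g x := by
    rw [← h.exp_eq y hy, ← h.exp_eq x hx, hxy, exp_eq_exp_iff_exists_int]
    exact ⟨1, by push_cast; ring⟩
  simp [hg hy hx hgxy] at hxy

lemma exists_translation (h : IsAngleLift Λ g U) {W : Set X} (hW : IsConnected W) (hWU : W ⊆ U)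
    {f : X → X} (hf : ContinuousOn f W) (hfW : MapsTo f W U) {τ : ℝ}
    (hgf : ∀ x ∈ W, g (f x) = exp (2 * Real.pi * τ * I) * g x) :
    ∃ t : ℝ, (t : UnitAddCircle) = τ ∧ ∀ x ∈ W, Λ (f x) = Λ x + t := by
  have hexp : ∀ x ∈ W,
      exp (2 * Real.pi * Λ (f x) * I) = exp (2 * Real.pi * (Λ x + τ) * I) := by
    intro x hx
    rw [h.exp_eq _ (hfW hx), hgf x hx, ← h.exp_eq x (hWU hx), ← exp_add]
    ring_nf
  obtain ⟨⟨z, hz⟩, hWpre⟩ := hW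
  obtain ⟨k, hk⟩ := exp_eq_exp_iff_exists_int.1 (hexp z hz)
  refine ⟨τ + k, by simp, fun x hx => ?_⟩
  have hlift : EqOn (fun x => 2 * Real.pi * Λ (f x) * I)
      (fun x => 2 * Real.pi * (Λ x + τ) * I + k * (2 * Real.pi * I)) W :=
    eqOn_of_exp_eqOn hWpre
      ((continuousOn_const.mul (h.continuousOn.comp hf hfW)).mul continuousOn_const)
      (((continuousOn_const.mul ((h.continuousOn.mono hWU).add continuousOn_const)).mul
        continuousOn_const).add continuousOn_const)
      (fun x hx => (hexp x hx).trans (exp_eq_exp_iff_exists_int.2 ⟨-k, by push_cast; ring⟩)) hz hk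
  refine mul_left_cancel₀ two_pi_I_ne_zero ?_
  push_cast
  linear_combination hlift hx

end IsAngleLift

/-- The map `f` sends `D` to itself and, read in the injective coordinate `g : D → ℂ`, is the
rotation through the angle `2πτ`; only the centre `o` may have coordinate `0`. The image of `g`
need not be a disk, and `o` need not lie in `D`. -/
structure IsConjRotationOn (g : X → ℂ) (f : X → X) (D : Set X) (o : X) (τ : ℝ) : Prop where
  continuousOn_coord : ContinuousOn g D
  injOn : InjOn g D
  eq_center : ∀ x ∈ D, g x = 0 → x = o
  continuousOn : ContinuousOn f D
  mapsTo : MapsTo f D D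
  coord_apply : ∀ x ∈ D, g (f x) = exp (2 * Real.pi * τ * I) * g x

namespace IsConjRotationOn

lemma iterate {g : X → ℂ} {f : X → X} {D : Set X} {o : X} {τ : ℝ}
    (h : IsConjRotationOn g f D o τ) (n : ℕ) : IsConjRotationOn g f^[n] D o (n * τ) where
  __ := h
  continuousOn := h.continuousOn.iterate h.mapsTo n
  mapsTo := h.mapsTo.iterate n
  coord_apply := by
    induction n with
    | zero => simp
    | succ n ih =>
      intro x hx
      rw [Function.iterate_succ_apply', h.coord_apply _ (h.mapsTo.iterate n hx), ih x hx,
        ← mul_assoc, ← exp_add]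
      push_cast
      ring_nf

theorem mul_norm_angle_le_one {g : E → ℂ} {f : E → E} {D U W : Set E} {o z : E} {τ : ℝ}
    (h : IsConjRotationOn g f D o τ) (hU : Convex ℝ U) (hUD : U ⊆ D) (ho : o ∉ U)
    (hW : Convex ℝ W) (hWc : IsCompact W) (hWU : W ⊆ U) {m : ℕ} (hfW : MapsTo f W U)
    (hfmW : MapsTo f^[m] W U) (hfz : ∀ j ≤ m, f^[j] z ∈ W) :
    m * ‖(τ : UnitAddCircle)‖ ≤ 1 := by
  have hz : z ∈ W := hfz 0 m.zero_le
  have hWD : W ⊆ D := hWU.trans hUD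
  have hWconn : IsConnected W := ⟨⟨z, hz⟩, hW.isPreconnected⟩
  obtain ⟨Λ, hΛ⟩ := exists_isAngleLift hU ⟨z, hWU hz⟩ (h.continuousOn_coord.mono hUD)
    fun x hx hgx => ho (h.eq_center x (hUD hx) hgx ▸ hx)
  obtain ⟨t, ht, hft⟩ := hΛ.exists_translation hWconn hWU (h.continuousOn.mono hWD) hfW
    fun x hx => h.coord_apply x (hWD hx)
  obtain ⟨s, -, hfs⟩ := hΛ.exists_translation hWconn hWU ((h.iterate m).continuousOn.mono hWD) hfmW
    fun x hx => (h.iterate m).coord_apply x (hWD hx)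
  have hiter : ∀ j ≤ m, Λ (f^[j] z) = Λ z + j * t := by
    intro j hj
    induction j with
    | zero => simp
    | succ j ih =>
      rw [Function.iterate_succ_apply', hft _ (hfz j (by omega)), ih (by omega)]
      push_cast
      ring
  have hs : s = m * t := by
    exact_mod_cast add_left_cancel ((hfs z hz).symm.trans (hiter m le_rfl))
  have hnorm : m * ‖(τ : UnitAddCircle)‖ ≤ |s| := by
    rw [hs, abs_mul, Nat.abs_cast]
    gcongr
    rw [← ht, UnitAddCircle.norm_eq]
    simpa using round_le t 0
  by_contra! hlt
  have hchord : HasChord Λ W |s| :=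
    HasChord.abs ⟨z, hz, f^[m] z, hfz m le_rfl, by rw [hfs z hz, add_sub_cancel_left]⟩
  rw [← add_sub_cancel 1 |s|] at hchord
  refine hΛ.not_hasChord_one (h.injOn.mono hUD) ?_
  exact (hchord.of_add hW hWc (hΛ.continuousOn.mono hWU) one_pos (by linarith)).elim
    (·.mono hWU) (·.of_translation hWU hfmW hfs)

end IsConjRotationOn

end RotationCoordinate

section UniformLimits

variable {ι X Y : Type*} {l : Filter ι}

lemma exists_mem_nhdsWithin_eventually_mapsTo [TopologicalSpace X] [UniformSpace Y]
    {F : ι → X → Y} {f : X → Y} {D : Set X} (h : TendstoUniformlyOn F f l D) {z : X}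
    (hf : ContinuousWithinAt f D z) {V : Set Y} (hV : V ∈ 𝓝 (f z)) :
    ∃ W ∈ 𝓝[D] z, ∀ᶠ k in l, MapsTo (F k) W V := by
  have hprod : TendstoUniformlyOn (fun q : ι × X => F q.1) f (l ×ˢ 𝓝[D] z) D :=
    fun u hu => tendsto_fst.eventually (h u hu)
  have htendsto : Tendsto (fun q : ι × X => F q.1 q.2) (l ×ˢ 𝓝[D] z) (𝓝 (f z)) :=
    hprod.tendsto_comp hf tendsto_snd
  obtain ⟨P, hP, Q, hQ, hPQ⟩ := eventually_prod_iff.1 (htendsto hV)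
  exact ⟨{x | Q x}, hQ, hP.mono fun _ hk _ hx => hPQ hk hx⟩

lemma tendstoUniformlyOn_iterate [UniformSpace X] {F : ι → X → X} {f : X → X} {D : Set X}
    (h : TendstoUniformlyOn F f l D) (hf : UniformContinuousOn f D) (hfD : MapsTo f D D)
    (hFD : ∀ᶠ k in l, MapsTo (F k) D D) (n : ℕ) :
    TendstoUniformlyOn (fun k => (F k)^[n]) f^[n] l D := by
  induction n with
  | zero => exact fun u hu => .of_forall fun _ _ _ => refl_mem_uniformity hu
  | succ n ih =>
    intro u hu
    obtain ⟨v, hv, hvu⟩ := comp_mem_uniformity_sets hu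
    filter_upwards [hFD, h v hv,
      hf.comp_tendstoUniformlyOn_eventually (hFD.mono fun k hk x hx => hk.iterate n hx)
        (fun x hx => hfD.iterate n hx) ih v hv] with k hk hFf hff x hx
    rw [Function.iterate_succ_apply', Function.iterate_succ_apply']
    exact hvu (SetRel.prodMk_mem_comp (hff x hx) (hFf _ (hk.iterate n hx)))

end UniformLimits

section LimitsOfRotations

variable {ι E : Type*} [NormedAddCommGroup E] [NormedSpace ℝ E] {D : Set E} {o : E}
  {l : Filter ι} [l.NeBot] {φ : E → E} {f : ι → E → E} {g : ι → E → ℂ} {τ : ι → ℝ} {τ₀ : ℝ}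

theorem map_ne_self_of_limit (hD : Convex ℝ D) (hDc : IsCompact D)
    (hconj : ∀ k, IsConjRotationOn (g k) (f k) D o (τ k)) (hτ : Tendsto τ l (𝓝 τ₀))
    (hτ₀ : (τ₀ : UnitAddCircle) ≠ 0) (hconv : TendstoUniformlyOn f φ l D)
    (hφ : ContinuousOn φ D) (hφD : MapsTo φ D D) {z : E} (hz : z ∈ D) (hzo : z ≠ o) : φ z ≠ z := by
  intro hfix
  obtain ⟨m, hm⟩ : ∃ m : ℕ, 1 < m * ‖(τ₀ : UnitAddCircle)‖ := by
    simpa [nsmul_eq_mul] using exists_lt_nsmul (norm_pos_iff.2 hτ₀) 1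
  have hnorm : Tendsto (fun k => ‖(τ k : UnitAddCircle)‖) l (𝓝 ‖(τ₀ : UnitAddCircle)‖) :=
    ((AddCircle.continuous_mk' (1 : ℝ)).norm.tendsto τ₀).comp hτ
  have hτm : ∀ᶠ k in l, 1 < m * ‖(τ k : UnitAddCircle)‖ :=
    (hnorm.const_mul _).eventually_const_lt hm
  have hiterfix (j : ℕ) : φ^[j] z = z := Function.iterate_fixed hfix j
  have hiter (j : ℕ) := tendstoUniformlyOn_iterate hconv
    (hDc.uniformContinuousOn_of_continuous hφ) hφD (.of_forall fun k => (hconj k).mapsTo) j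
  have hball (j : ℕ) : ball z (dist z o) ∈ 𝓝 (φ^[j] z) := by
    rw [hiterfix]
    exact ball_mem_nhds z (dist_pos.2 hzo)
  have hmaps (j : ℕ) := exists_mem_nhdsWithin_eventually_mapsTo (hiter j)
    (hφ.iterate hφD j z hz) (hball j)
  obtain ⟨W₁, hW₁, hfW₁⟩ := hmaps 1
  obtain ⟨W₂, hW₂, hfW₂⟩ := hmaps m
  obtain ⟨r, hr, hrW⟩ := (nhdsWithin_hasBasis nhds_basis_closedBall D).mem_iff.1
    (inter_mem (inter_mem hW₁ hW₂) (mem_nhdsWithin_of_mem_nhds (hball 0)))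
  have horbit : ∀ᶠ k in l, ∀ j ∈ Iic m, (f k)^[j] z ∈ closedBall z r := by
    refine (eventually_all_finite (finite_Iic m)).2 fun j _ => ?_
    refine (hiter j).tendsto_at hz ?_
    rw [hiterfix]
    exact closedBall_mem_nhds z hr
  obtain ⟨k, hτk, hk₁, hk₂, hkz⟩ := (hτm.and (hfW₁.and (hfW₂.and horbit))).exists
  refine hτk.not_ge ((hconj k).mul_norm_angle_le_one (z := z) (U := ball z (dist z o) ∩ D)
    (W := closedBall z r ∩ D) ((convex_ball _ _).inter hD) inter_subset_right ?_
    ((convex_closedBall _ _).inter hD) (hDc.inter_left isClosed_closedBall) ?_ ?_ ?_ ?_)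
  · simp [dist_comm]
  · exact fun x hx => ⟨(hrW hx).2, hx.2⟩
  · exact fun x hx => ⟨hk₁ (hrW hx).1.1, (hconj k).mapsTo hx.2⟩
  · exact fun x hx => ⟨hk₂ (hrW hx).1.2, (hconj k).mapsTo.iterate m hx.2⟩
  · exact fun j hj => ⟨hkz j hj, (hconj k).mapsTo.iterate j hz⟩

theorem no_periodic_points_of_limit_general (hD : Convex ℝ D) (hDc : IsCompact D)
    (hconj : ∀ k, IsConjRotationOn (g k) (f k) D o (τ k)) (hτ : Tendsto τ l (𝓝 τ₀))
    (hirr : Irrational τ₀) (hconv : TendstoUniformlyOn f φ l D) :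
    ∀ z ∈ D, z ≠ o → ∀ n : ℕ, 1 ≤ n → φ^[n] z ≠ z := by
  intro z hz hzo n hn
  have hφ : ContinuousOn φ D := hconv.continuousOn (.of_forall fun k => (hconj k).continuousOn)
  have hφD : MapsTo φ D D := fun x hx => hDc.isClosed.mem_of_tendsto (hconv.tendsto_at hx)
    (.of_forall fun k => (hconj k).mapsTo hx)
  have hnτ : ((n * τ₀ : ℝ) : UnitAddCircle) ≠ 0 := by
    rw [Ne, AddCircle.coe_eq_zero_iff]
    rintro ⟨p, hp⟩
    exact (hirr.natCast_mul (Nat.one_le_iff_ne_zero.1 hn)).ne_int p (by simpa using hp.symm)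
  exact map_ne_self_of_limit hD hDc (fun k => (hconj k).iterate n) (hτ.const_mul _) hnτ
    (tendstoUniformlyOn_iterate hconv (hDc.uniformContinuousOn_of_continuous hφ) hφD
      (.of_forall fun k => (hconj k).mapsTo) n)
    (hφ.iterate hφD n) (hφD.iterate n) hz hzo

end LimitsOfRotations

lemma mapsTo_disk_exp_mul (τ : ℝ) :
    MapsTo (fun z => exp (2 * Real.pi * τ * I) * z) Disk Disk := by
  intro z hz
  have hnorm : ‖exp (2 * Real.pi * τ * I)‖ = 1 := by
    exact_mod_cast norm_exp_ofReal_mul_I (2 * Real.pi * τ)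
  simpa [Disk, hnorm] using hz

lemma DiskHomeo.isConjRotationOn (g : DiskHomeo) (hg₀ : g.toFun 0 = 0) {f : ℂ → ℂ} {τ : ℝ}
    (hf : ∀ z ∈ Disk, f z = g.invFun (exp (2 * Real.pi * τ * I) * g.toFun z)) :
    IsConjRotationOn g.toFun f Disk 0 τ := by
  have hinj : InjOn g.toFun Disk := LeftInvOn.injOn g.left_inv
  have hrot := (mapsTo_disk_exp_mul τ).comp g.mapsTo
  refine ⟨g.cont, hinj, fun z hz hgz => ?_, ?_, ?_, fun z hz => ?_⟩
  · exact hinj hz (mem_closedBall_self zero_le_one) (hgz.trans hg₀.symm)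
  · exact (g.cont_inv.comp (continuousOn_const.mul g.cont) hrot).congr hf
  · exact (g.mapsTo_inv.comp hrot).congr fun z hz => (hf z hz).symm
  · exact (congrArg g.toFun (hf z hz)).trans (g.right_inv _ (hrot hz))

/-- If orientation-preserving homeomorphisms `φ_k` of the disk fixing the origin,
each conjugate (by an orientation-preserving homeomorphism `g_k` fixing the origin)
to the rigid rotation through angle `2πθ_k`, converge uniformly to a homeomorphism
`φ` fixing the origin, and `θ_k → θ` with `θ` irrational, then `φ` has no periodic
points in `D ∖ {0}`. -/
theorem no_periodic_points_of_limit
    (φ : DiskHomeo) (φk : ℕ → DiskHomeo) (g : ℕ → DiskHomeo)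
    (θk : ℕ → ℝ) (θ : ℝ)
    (hφor : OrientationPreserving φ)
    (hφkor : ∀ k, OrientationPreserving (φk k))
    (hφ0 : φ.toFun 0 = 0)
    (hφk0 : ∀ k, (φk k).toFun 0 = 0)
    (hgor : ∀ k, OrientationPreserving (g k))
    (hg0 : ∀ k, (g k).toFun 0 = 0)
    (hconj : ∀ k, ∀ z ∈ Disk,
      (φk k).toFun z =
        (g k).invFun (Complex.exp ((2 * Real.pi * θk k) * Complex.I) * (g k).toFun z))
    (hθ : Tendsto θk atTop (nhds θ))
    (hirr : Irrational θ)
    (hconv : TendstoUniformlyOn (fun k => (φk k).toFun) φ.toFun atTop Disk) :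
    ∀ z ∈ Disk, z ≠ 0 → ∀ n : ℕ, 1 ≤ n → φ.toFun^[n] z ≠ z := by
  exact no_periodic_points_of_limit_general (convex_closedBall 0 1) (isCompact_closedBall 0 1)
    (fun k => (g k).isConjRotationOn (hg0 k) (hconj k)) hθ hirr hconv
end

section
/- Fix a Hamiltonian H as in the context and a constant c₀ ∈ (0,∞). Then there exists a sequence of constants c_k ∈ (0,∞), k ≥ 1, depending only on H and c₀, with the following property: for every n ≥ 1, every S ≤ 0, every τ₀ ∈ ℝ, and every C^∞ map z : [S,∞)×ℝ → D satisfying z(s,t+n) = z(s,t), the Floer equation ∂_s z + i·(∂_t z − X_H(t+τ₀, z)) = 0, the boundary condition |z(S,t)| = 1 for all t, and the gradient bound |∂_s z| ≤ c₀, |∂_t z| ≤ c₀ everywhere, all partial derivatives of z of total order k+1 are bounded in absolute value by c_k on [S,∞)×ℝ. -/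
open Complex Set MeasureTheory ENNReal Filter

/-- The Hamiltonian vector field `X_H(t,z) = (−∂_y H, ∂_x H)`, written in complex
notation as `i · (∂_x H + i ∂_y H)`. -/
noncomputable def XH (H : ℝ → ℂ → ℝ) (t : ℝ) (w : ℂ) : ℂ :=
  Complex.I * ((fderiv ℝ (H t) w 1 : ℝ) + (fderiv ℝ (H t) w Complex.I : ℝ) * Complex.I)

/-- Admissible Hamiltonians: smooth, 1-periodic in time, constant on the boundary circle. -/
structure IsAdmissible (H : ℝ → ℂ → ℝ) : Prop where
  smooth : ContDiff ℝ (⊤ : ℕ∞) (fun p : ℝ × ℂ => H p.1 p.2)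
  periodic : ∀ (t : ℝ) (z : ℂ), H (t + 1) z = H t z
  bdry_const : ∀ (t : ℝ), ∀ z w : ℂ, ‖z‖ = 1 → ‖w‖ = 1 → H t z = H t w

/-- The half plane `[S,∞) × ℝ`. -/
def HalfPlaneFrom (S : ℝ) : Set (ℝ × ℝ) := Set.Ici S ×ˢ Set.univ

/-- Partial derivative in the `s`-direction, taken within a set `A`. -/
noncomputable def pds {E : Type*} [NormedAddCommGroup E] [NormedSpace ℝ E]
    (A : Set (ℝ × ℝ)) (f : ℝ × ℝ → E) (p : ℝ × ℝ) : E :=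
  fderivWithin ℝ f A p (1, 0)

/-- Partial derivative in the `t`-direction, taken within a set `A`. -/
noncomputable def pdt {E : Type*} [NormedAddCommGroup E] [NormedSpace ℝ E]
    (A : Set (ℝ × ℝ)) (f : ℝ × ℝ → E) (p : ℝ × ℝ) : E :=
  fderivWithin ℝ f A p (0, 1)

/-! Bernstein's method, by induction on the order of differentiation. A tangential derivative
`v = ∂_t^k u` of a solution satisfies `∂_s v = L ∂_t v + ∂_t^(k+1) Q` with `L² = -1`, so its
Laplacian is lower order up to a term which is linear in `∂_t v`. At a maximum of
`χ²|∂_t v|² + A|v|²`, with `χ` a cutoff and `A` large, this bounds `∂_t v` by the derivatives of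
lower order. The method also works at a boundary maximum if the normal derivative of the function
vanishes there. Near the boundary it is therefore applied to the logarithmic derivative
`u = ∂_t z / z`: as `|z| = 1` and `H(t, ·)` is constant on the circle, `Re u = 0` and
`Im (i X_H / z) = 0` there, which forces `Im ∂_s ∂_t^k u = 0`, whence `∂_t^k u` and its
`s`-derivative are orthogonal. The derivatives in `s` are recovered from the equation. -/

open scoped Topology InnerProductSpace Asymptotics

/-- The horizontal strip `J × ℝ` of points `(s, t)` with `s ∈ J`. -/
abbrev strip (J : Set ℝ) : Set (ℝ × ℝ) := J ×ˢ univ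

section PartialDerivatives

variable {E E' : Type*} [NormedAddCommGroup E] [NormedSpace ℝ E]
  [NormedAddCommGroup E'] [NormedSpace ℝ E'] {A : Set (ℝ × ℝ)}

theorem contDiffOn_pds (hA : UniqueDiffOn ℝ A) {f : ℝ × ℝ → E}
    (hf : ContDiffOn ℝ (⊤ : ℕ∞) f A) : ContDiffOn ℝ (⊤ : ℕ∞) (pds A f) A :=
  (hf.fderivWithin hA le_rfl).clm_apply contDiffOn_const

theorem contDiffOn_pdt (hA : UniqueDiffOn ℝ A) {f : ℝ × ℝ → E}
    (hf : ContDiffOn ℝ (⊤ : ℕ∞) f A) : ContDiffOn ℝ (⊤ : ℕ∞) (pdt A f) A :=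
  (hf.fderivWithin hA le_rfl).clm_apply contDiffOn_const

theorem contDiffOn_iterate_pdt (hA : UniqueDiffOn ℝ A) {f : ℝ × ℝ → E}
    (hf : ContDiffOn ℝ (⊤ : ℕ∞) f A) (k : ℕ) : ContDiffOn ℝ (⊤ : ℕ∞) ((pdt A)^[k] f) A := by
  induction k with
  | zero => exact hf
  | succ k ih => rw [Function.iterate_succ_apply']; exact contDiffOn_pdt hA ih

theorem pds_congr {f g : ℝ × ℝ → E} (h : EqOn f g A) : EqOn (pds A f) (pds A g) A :=
  fun p hp => by simp only [pds, fderivWithin_congr h (h hp)]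

theorem pdt_congr {f g : ℝ × ℝ → E} (h : EqOn f g A) : EqOn (pdt A f) (pdt A g) A :=
  fun p hp => by simp only [pdt, fderivWithin_congr h (h hp)]

theorem iterate_pdt_congr {f g : ℝ × ℝ → E} (h : EqOn f g A) (k : ℕ) :
    EqOn ((pdt A)^[k] f) ((pdt A)^[k] g) A := by
  induction k with
  | zero => exact h
  | succ k ih => simp only [Function.iterate_succ_apply']; exact pdt_congr ih

theorem fderivWithin_clm_apply_add (hA : UniqueDiffOn ℝ A) (L : E →L[ℝ] E') {f : ℝ × ℝ → E}
    {g : ℝ × ℝ → E'} (hf : DifferentiableOn ℝ f A) (hg : DifferentiableOn ℝ g A) {p : ℝ × ℝ}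
    (hp : p ∈ A) :
    fderivWithin ℝ (fun q => L (f q) + g q) A p =
      L ∘L fderivWithin ℝ f A p + fderivWithin ℝ g A p :=
  ((L.hasFDerivAt.comp_hasFDerivWithinAt p (hf p hp).hasFDerivWithinAt).add
    (hg p hp).hasFDerivWithinAt).fderivWithin (hA p hp)

theorem pds_clm_apply_add (hA : UniqueDiffOn ℝ A) (L : E →L[ℝ] E') {f : ℝ × ℝ → E}
    {g : ℝ × ℝ → E'} (hf : DifferentiableOn ℝ f A) (hg : DifferentiableOn ℝ g A) :
    EqOn (pds A fun q => L (f q) + g q) (fun q => L (pds A f q) + pds A g q) A :=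
  fun p hp => by simp [pds, fderivWithin_clm_apply_add hA L hf hg hp]

theorem pdt_clm_apply_add (hA : UniqueDiffOn ℝ A) (L : E →L[ℝ] E') {f : ℝ × ℝ → E}
    {g : ℝ × ℝ → E'} (hf : DifferentiableOn ℝ f A) (hg : DifferentiableOn ℝ g A) :
    EqOn (pdt A fun q => L (f q) + g q) (fun q => L (pdt A f q) + pdt A g q) A :=
  fun p hp => by simp [pdt, fderivWithin_clm_apply_add hA L hf hg hp]

theorem iterate_pdt_clm_apply_add (hA : UniqueDiffOn ℝ A) (L : E →L[ℝ] E') {f : ℝ × ℝ → E}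
    {g : ℝ × ℝ → E'} (hf : ContDiffOn ℝ (⊤ : ℕ∞) f A) (hg : ContDiffOn ℝ (⊤ : ℕ∞) g A) (k : ℕ) :
    EqOn ((pdt A)^[k] fun q => L (f q) + g q)
      (fun q => L ((pdt A)^[k] f q) + (pdt A)^[k] g q) A := by
  induction k with
  | zero => exact fun _ _ => rfl
  | succ k ih =>
    simp only [Function.iterate_succ_apply']
    exact (pdt_congr ih).trans <| pdt_clm_apply_add hA L
      ((contDiffOn_iterate_pdt hA hf k).differentiableOn (by simp))
      ((contDiffOn_iterate_pdt hA hg k).differentiableOn (by simp))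

theorem pds_pdt_comm (hA : UniqueDiffOn ℝ A) (hA' : A ⊆ closure (interior A)) {f : ℝ × ℝ → E}
    (hf : ContDiffOn ℝ (⊤ : ℕ∞) f A) : EqOn (pds A (pdt A f)) (pdt A (pds A f)) A := by
  intro p hp
  have second_fderiv (a b : ℝ × ℝ) : fderivWithin ℝ (fun q => fderivWithin ℝ f A q a) A p b =
      fderivWithin ℝ (fderivWithin ℝ f A) A p b a := by
    rw [fderivWithin_clm_apply (hA p hp)
      (((contDiffOn_infty_iff_fderivWithin hA).1 hf).2.differentiableOn (by simp) p hp)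
      (differentiableWithinAt_const a)]
    simp
  have symm : IsSymmSndFDerivWithinAt ℝ f A p :=
    (hf p hp).isSymmSndFDerivWithinAt
      (by rw [minSmoothness_of_isRCLikeNormedField]; exact WithTop.coe_le_coe.2 le_top)
      hA (hA' hp) hp
  calc pds A (pdt A f) p = fderivWithin ℝ (fderivWithin ℝ f A) A p (1, 0) (0, 1) :=
        second_fderiv (0, 1) (1, 0)
    _ = fderivWithin ℝ (fderivWithin ℝ f A) A p (0, 1) (1, 0) := symm _ _
    _ = pdt A (pds A f) p := (second_fderiv (1, 0) (0, 1)).symm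

theorem pds_iterate_pdt_comm (hA : UniqueDiffOn ℝ A) (hA' : A ⊆ closure (interior A))
    {f : ℝ × ℝ → E} (hf : ContDiffOn ℝ (⊤ : ℕ∞) f A) (k : ℕ) :
    EqOn (pds A ((pdt A)^[k] f)) ((pdt A)^[k] (pds A f)) A := by
  induction k with
  | zero => exact fun _ _ => rfl
  | succ k ih =>
    simp only [Function.iterate_succ_apply']
    exact (pds_pdt_comm hA hA' (contDiffOn_iterate_pdt hA hf k)).trans (pdt_congr ih)

variable {L : E →L[ℝ] E}

theorem pds_iterate_pdt_of_eq (hA : UniqueDiffOn ℝ A) (hA' : A ⊆ closure (interior A))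
    {u g : ℝ × ℝ → E} (hu : ContDiffOn ℝ (⊤ : ℕ∞) u A) (hg : ContDiffOn ℝ (⊤ : ℕ∞) g A)
    (h : EqOn (pds A u) (fun p => L (pdt A u p) + g p) A) (k : ℕ) :
    EqOn (pds A ((pdt A)^[k] u)) (fun p => L ((pdt A)^[k + 1] u p) + (pdt A)^[k] g p) A :=
  ((pds_iterate_pdt_comm hA hA' hu k).trans (iterate_pdt_congr h k)).trans
    (iterate_pdt_clm_apply_add hA L (contDiffOn_pdt hA hu) hg k)

/-- The Laplacian `∂_s² + ∂_t²`, with partial derivatives taken within `A`. -/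
noncomputable def lap (A : Set (ℝ × ℝ)) (f : ℝ × ℝ → E) (p : ℝ × ℝ) : E :=
  pds A (pds A f) p + pdt A (pdt A f) p

theorem lap_of_pds_eq (hL : ∀ x, L (L x) = -x) (hA : UniqueDiffOn ℝ A)
    (hA' : A ⊆ closure (interior A)) {v g : ℝ × ℝ → E} (hv : ContDiffOn ℝ (⊤ : ℕ∞) v A)
    (hg : ContDiffOn ℝ (⊤ : ℕ∞) g A) (h : EqOn (pds A v) (fun p => L (pdt A v p) + g p) A) :
    EqOn (lap A v) (fun p => L (pdt A g p) + pds A g p) A := by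
  intro p hp
  have hvt := contDiffOn_pdt hA hv
  have hgd := hg.differentiableOn (by simp)
  have hvtd := hvt.differentiableOn (by simp)
  have hss : pds A (pds A v) p = L (pds A (pdt A v) p) + pds A g p :=
    (pds_congr h).trans (pds_clm_apply_add hA L hvtd hgd) hp
  have hst : pds A (pdt A v) p = L (pdt A (pdt A v) p) + pdt A g p :=
    ((pds_pdt_comm hA hA' hv).trans (pdt_congr h)).trans (pdt_clm_apply_add hA L hvtd hgd) hp
  simp only [lap, hss, hst, map_add, hL]
  abel

theorem lap_iterate_pdt_of_pds_eq (hL : ∀ x, L (L x) = -x) (hA : UniqueDiffOn ℝ A)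
    (hA' : A ⊆ closure (interior A)) {u Q : ℝ × ℝ → E} (hu : ContDiffOn ℝ (⊤ : ℕ∞) u A)
    (hQ : ContDiffOn ℝ (⊤ : ℕ∞) Q A)
    (h : EqOn (pds A u) (fun p => L (pdt A u p) + pdt A Q p) A) (k : ℕ) :
    EqOn (lap A ((pdt A)^[k] u)) ((pdt A)^[k + 1] fun p => L (pdt A Q p) + pds A Q p) A := by
  intro p hp
  have hQt := contDiffOn_pdt hA hQ
  have hv : EqOn (pds A ((pdt A)^[k] u))
      (fun p => L (pdt A ((pdt A)^[k] u) p) + (pdt A)^[k] (pdt A Q) p) A := by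
    simpa only [Function.iterate_succ_apply'] using pds_iterate_pdt_of_eq hA hA' hu hQt h k
  have hcomm : pds A ((pdt A)^[k] (pdt A Q)) p = (pdt A)^[k + 1] (pds A Q) p :=
    pds_iterate_pdt_comm hA hA' hQ (k + 1) hp
  calc lap A ((pdt A)^[k] u) p
      = L (pdt A ((pdt A)^[k] (pdt A Q)) p) + pds A ((pdt A)^[k] (pdt A Q)) p :=
        lap_of_pds_eq hL hA hA' (contDiffOn_iterate_pdt hA hu k) (contDiffOn_iterate_pdt hA hQt k)
          hv hp
    _ = L ((pdt A)^[k + 1] (pdt A Q) p) + (pdt A)^[k + 1] (pds A Q) p := by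
        rw [hcomm, Function.iterate_succ_apply' (pdt A) k (pdt A Q)]
    _ = (pdt A)^[k + 1] (fun p => L (pdt A Q p) + pds A Q p) p :=
        (iterate_pdt_clm_apply_add hA L hQt (contDiffOn_pds hA hQ) (k + 1) hp).symm

end PartialDerivatives

section Lines

variable {E E' : Type*} [NormedAddCommGroup E] [NormedSpace ℝ E]
  [NormedAddCommGroup E'] [NormedSpace ℝ E'] {J : Set ℝ}

theorem uniqueDiffOn_strip (hJ : UniqueDiffOn ℝ J) : UniqueDiffOn ℝ (strip J) :=
  hJ.prod uniqueDiffOn_univ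

theorem strip_subset_closure_interior (hJ : J ⊆ closure (interior J)) :
    strip J ⊆ closure (interior (strip J)) := by
  rw [interior_prod_eq, closure_prod_eq]
  exact fun p hp => ⟨hJ hp.1, by simp⟩

theorem hasDerivAt_line_pdt {f : ℝ × ℝ → E} (hf : DifferentiableOn ℝ f (strip J)) {s : ℝ}
    (hs : s ∈ J) (t : ℝ) : HasDerivAt (fun t => f (s, t)) (pdt (strip J) f (s, t)) t :=
  hasDerivWithinAt_univ.1 <|
    (hf (s, t) ⟨hs, mem_univ t⟩).hasFDerivWithinAt.comp_hasDerivWithinAt t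
      ((hasDerivAt_const t s).prodMk (hasDerivAt_id t)).hasDerivWithinAt fun _ h => ⟨hs, h⟩

theorem hasDerivWithinAt_line_pds {f : ℝ × ℝ → E} (hf : DifferentiableOn ℝ f (strip J)) {s : ℝ}
    (hs : s ∈ J) (t : ℝ) : HasDerivWithinAt (fun s => f (s, t)) (pds (strip J) f (s, t)) J s :=
  (hf (s, t) ⟨hs, mem_univ t⟩).hasFDerivWithinAt.comp_hasDerivWithinAt s
    ((hasDerivAt_id s).prodMk (hasDerivAt_const s t)).hasDerivWithinAt
    fun _ h => mk_mem_prod h (mem_univ t)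

theorem contDiff_line {f : ℝ × ℝ → E} (hf : ContDiffOn ℝ (⊤ : ℕ∞) f (strip J)) {s : ℝ}
    (hs : s ∈ J) : ContDiff ℝ (⊤ : ℕ∞) fun t => f (s, t) :=
  hf.comp_contDiff (contDiff_const.prodMk contDiff_id) fun t => mk_mem_prod hs (mem_univ t)

theorem iterate_pdt_eq_iteratedDeriv (hJ : UniqueDiffOn ℝ J) {f : ℝ × ℝ → E}
    (hf : ContDiffOn ℝ (⊤ : ℕ∞) f (strip J)) (k : ℕ) {p : ℝ × ℝ} (hp : p ∈ strip J) :
    (pdt (strip J))^[k] f p = iteratedDeriv k (fun t => f (p.1, t)) p.2 := by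
  obtain ⟨s, t⟩ := p
  have hs : s ∈ J := hp.1
  clear hp
  dsimp only
  induction k generalizing t with
  | zero => simp
  | succ k ih =>
    rw [Function.iterate_succ_apply', iteratedDeriv_succ, ← funext ih]
    have hdiff := (contDiffOn_iterate_pdt (uniqueDiffOn_strip hJ) hf k).differentiableOn (by simp)
    exact (hasDerivAt_line_pdt hdiff hs t).deriv.symm

theorem clm_iterate_pdt_eq_zero (hJ : UniqueDiffOn ℝ J) (L : E →L[ℝ] E') {f : ℝ × ℝ → E}
    (hf : ContDiffOn ℝ (⊤ : ℕ∞) f (strip J)) {s : ℝ} (hs : s ∈ J) (h : ∀ t, L (f (s, t)) = 0)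
    (k : ℕ) (t : ℝ) : L ((pdt (strip J))^[k] f (s, t)) = 0 := by
  have hline := contDiff_line hf hs
  calc L ((pdt (strip J))^[k] f (s, t)) = iteratedDeriv k (L ∘ fun t => f (s, t)) t := by
        rw [iterate_pdt_eq_iteratedDeriv hJ hf k (mk_mem_prod hs (mem_univ t)),
          iteratedDeriv_eq_iteratedFDeriv, iteratedDeriv_eq_iteratedFDeriv,
          L.iteratedFDeriv_comp_left hline.contDiffAt (by exact_mod_cast le_top)]
        rfl
    _ = 0 := by rw [show (L ∘ fun t => f (s, t)) = fun _ => (0 : E') from funext h]; simp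

end Lines

section SecondDerivativeTest

theorem second_deriv_nonpos_of_isLocalMaxOn {J : Set ℝ} {φ ψ : ℝ → ℝ} {x d : ℝ}
    (hJ : J ∈ 𝓝[≥] x) (hφ : ∀ y ∈ J, HasDerivWithinAt φ (ψ y) J y) (hx : ψ x = 0)
    (hψ : HasDerivWithinAt ψ d J x) (hmax : IsLocalMaxOn φ J x) : d ≤ 0 := by
  by_contra! hd
  have hψ_pos : ∀ᶠ y in 𝓝[>] x, 0 < ψ y := by
    have hslope := (hasDerivWithinAt_iff_tendsto_slope' self_notMem_Ioi).1
      (hψ.mono_of_mem_nhdsWithin hJ).Ioi_of_Ici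
    filter_upwards [hslope.eventually (lt_mem_nhds hd), self_mem_nhdsWithin] with y hy hxy
    rw [slope_def_field, hx, sub_zero] at hy
    exact (div_pos_iff_of_pos_right (sub_pos.2 hxy)).1 hy
  have hφ_le : ∀ᶠ y in 𝓝[>] x, φ y ≤ φ x :=
    nhdsWithin_mono x Ioi_subset_Ici_self (nhdsWithin_le_iff.2 hJ hmax)
  have hJ_gt : ∀ᶠ y in 𝓝[>] x, y ∈ J := nhdsWithin_mono x Ioi_subset_Ici_self hJ
  obtain ⟨e, hxe, he⟩ := mem_nhdsGT_iff_exists_Ioo_subset.1 (hψ_pos.and (hφ_le.and hJ_gt))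
  obtain ⟨y, hxy, hye⟩ := exists_between (mem_Ioi.1 hxe)
  have hsub : Icc x y ⊆ J := fun w hw => hw.1.eq_or_lt.elim
    (fun h => h ▸ mem_of_mem_nhdsWithin self_mem_Ici hJ) fun h => (he ⟨h, hw.2.trans_lt hye⟩).2.2
  have hmono : StrictMonoOn φ (Icc x y) := by
    refine strictMonoOn_of_deriv_pos (convex_Icc x y)
      (fun w hw => (hφ w (hsub hw)).continuousWithinAt.mono hsub) fun w hw => ?_
    rw [interior_Icc] at hw
    have hw' := hφ w (hsub (Ioo_subset_Icc_self hw))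
    rw [(hw'.hasDerivAt (mem_of_superset (Icc_mem_nhds hw.1 hw.2) hsub)).deriv]
    exact (he ⟨hw.1, hw.2.trans hye⟩).1
  exact (hmono (left_mem_Icc.2 hxy.le) (right_mem_Icc.2 hxy.le) hxy).not_ge (he ⟨hxy, hye⟩).2.1

end SecondDerivativeTest

section Bernstein

variable {E : Type*} [NormedAddCommGroup E] [InnerProductSpace ℝ E]

theorem hasDerivWithinAt_cutoff_energy {J : Set ℝ} {x σ e A : ℝ} {v w : ℝ → E} {v' w' : E}
    (hv : HasDerivWithinAt v v' J x) (hw : HasDerivWithinAt w w' J x) :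
    HasDerivWithinAt (fun y => (e - (y - σ) ^ 2) ^ 2 * ‖w y‖ ^ 2 + A * ‖v y‖ ^ 2)
      (-4 * (e - (x - σ) ^ 2) * (x - σ) * ‖w x‖ ^ 2
        + 2 * (e - (x - σ) ^ 2) ^ 2 * ⟪w x, w'⟫_ℝ + 2 * A * ⟪v x, v'⟫_ℝ) J x := by
  have hcutoff : HasDerivAt (fun y : ℝ => (e - (y - σ) ^ 2) ^ 2)
      (-4 * (e - (x - σ) ^ 2) * (x - σ)) x :=
    (((((hasDerivAt_id x).sub_const σ).pow 2).const_sub e).pow 2).congr_deriv (by simp; ring)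
  exact ((hcutoff.hasDerivWithinAt.mul hw.norm_sq).add (hv.norm_sq.const_mul A)).congr_deriv
    (by ring)

theorem hasDerivWithinAt_deriv_cutoff_energy {J : Set ℝ} {x σ e A : ℝ} {v w v₁ w₁ : ℝ → E}
    {v₂ w₂ : E} (hv : HasDerivWithinAt v (v₁ x) J x) (hw : HasDerivWithinAt w (w₁ x) J x)
    (hv₁ : HasDerivWithinAt v₁ v₂ J x) (hw₁ : HasDerivWithinAt w₁ w₂ J x) :
    HasDerivWithinAt (fun y => -4 * (e - (y - σ) ^ 2) * (y - σ) * ‖w y‖ ^ 2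
        + 2 * (e - (y - σ) ^ 2) ^ 2 * ⟪w y, w₁ y⟫_ℝ + 2 * A * ⟪v y, v₁ y⟫_ℝ)
      ((8 * (x - σ) ^ 2 - 4 * (e - (x - σ) ^ 2)) * ‖w x‖ ^ 2
        - 16 * (e - (x - σ) ^ 2) * (x - σ) * ⟪w x, w₁ x⟫_ℝ
        + 2 * (e - (x - σ) ^ 2) ^ 2 * (‖w₁ x‖ ^ 2 + ⟪w x, w₂⟫_ℝ)
        + 2 * A * (‖v₁ x‖ ^ 2 + ⟪v x, v₂⟫_ℝ)) J x := by
  have hshift := (hasDerivAt_id x).sub_const σ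
  have hχ := (hshift.pow 2).const_sub e
  have hχ_sq : HasDerivAt (fun y : ℝ => 2 * (e - (y - σ) ^ 2) ^ 2)
      (-8 * (e - (x - σ) ^ 2) * (x - σ)) x :=
    ((hχ.pow 2).const_mul 2).congr_deriv (by simp; ring)
  have hχ_mul : HasDerivAt (fun y : ℝ => -4 * (e - (y - σ) ^ 2) * (y - σ))
      (8 * (x - σ) ^ 2 - 4 * (e - (x - σ) ^ 2)) x :=
    ((hχ.const_mul (-4)).mul hshift).congr_deriv (by simp; ring)
  refine (((hχ_mul.hasDerivWithinAt.mul hw.norm_sq).add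
    (hχ_sq.hasDerivWithinAt.mul (hw.inner ℝ hw₁))).add
    ((hv.inner ℝ hv₁).const_mul (2 * A))).congr_deriv ?_
  rw [real_inner_self_eq_norm_sq, real_inner_self_eq_norm_sq]
  ring

theorem second_deriv_cutoff_energy_nonpos {J : Set ℝ} {x σ e A : ℝ} {v w v₁ w₁ : ℝ → E}
    {v₂ w₂ : E} (hJ : J ∈ 𝓝[≥] x)
    (hbdry : J ∈ 𝓝 x ∨ x = σ ∧ ⟪v x, v₁ x⟫_ℝ = 0 ∧ ⟪w x, w₁ x⟫_ℝ = 0)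
    (hv : ∀ y ∈ J, HasDerivWithinAt v (v₁ y) J y) (hw : ∀ y ∈ J, HasDerivWithinAt w (w₁ y) J y)
    (hv₁ : HasDerivWithinAt v₁ v₂ J x) (hw₁ : HasDerivWithinAt w₁ w₂ J x)
    (hmax : IsLocalMaxOn (fun y => (e - (y - σ) ^ 2) ^ 2 * ‖w y‖ ^ 2 + A * ‖v y‖ ^ 2) J x) :
    (8 * (x - σ) ^ 2 - 4 * (e - (x - σ) ^ 2)) * ‖w x‖ ^ 2
      - 16 * (e - (x - σ) ^ 2) * (x - σ) * ⟪w x, w₁ x⟫_ℝ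
      + 2 * (e - (x - σ) ^ 2) ^ 2 * (‖w₁ x‖ ^ 2 + ⟪w x, w₂⟫_ℝ)
      + 2 * A * (‖v₁ x‖ ^ 2 + ⟪v x, v₂⟫_ℝ) ≤ 0 := by
  have hxJ : x ∈ J := mem_of_mem_nhdsWithin self_mem_Ici hJ
  refine second_deriv_nonpos_of_isLocalMaxOn hJ
    (fun y hy => hasDerivWithinAt_cutoff_energy (hv y hy) (hw y hy)) ?_
    (hasDerivWithinAt_deriv_cutoff_energy (hv x hxJ) (hw x hxJ) hv₁ hw₁) hmax
  rcases hbdry with hnhds | ⟨rfl, hvx, hwx⟩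
  · exact (hmax.isLocalMax hnhds).hasDerivAt_eq_zero
      ((hasDerivWithinAt_cutoff_energy (hv x hxJ) (hw x hxJ)).hasDerivAt hnhds)
  · rw [hvx, hwx]
    ring

theorem two_mul_inner_le_norm_sq_add_norm_sq (a b : E) : 2 * ⟪a, b⟫_ℝ ≤ ‖a‖ ^ 2 + ‖b‖ ^ 2 := by
  linarith [norm_sub_sq_real a b, sq_nonneg ‖a - b‖]

theorem cutoff_cross_term_le (χ d : ℝ) (w w₁ : E) :
    16 * χ * d * ⟪w, w₁⟫_ℝ ≤ χ ^ 2 * ‖w₁‖ ^ 2 + 64 * d ^ 2 * ‖w‖ ^ 2 := by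
  have h := two_mul_inner_le_norm_sq_add_norm_sq ((8 * d) • w) (χ • w₁)
  rw [real_inner_smul_left, real_inner_smul_right, norm_smul, norm_smul, mul_pow, mul_pow,
    Real.norm_eq_abs, Real.norm_eq_abs, sq_abs, sq_abs] at h
  linarith

theorem neg_inner_top_order_le {M χ nt : ℝ} (hM : 0 ≤ M) (hχ₀ : 0 ≤ χ) (hχ₁ : χ ≤ 1) {w Δw : E}
    (hΔw : ‖Δw‖ ≤ M * (1 + ‖w‖ + nt)) :
    -(2 * χ ^ 2 * ⟪w, Δw⟫_ℝ) ≤ χ ^ 2 * nt ^ 2 + (1 + 2 * M + M ^ 2) * ‖w‖ ^ 2 + M ^ 2 := by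
  have hinner : -⟪w, Δw⟫_ℝ ≤ ‖w‖ * (M * (1 + ‖w‖ + nt)) :=
    (neg_le_abs _).trans <| (abs_real_inner_le_norm _ _).trans (by gcongr)
  have hχ : χ ^ 2 ≤ 1 := pow_le_one₀ hχ₀ hχ₁
  calc -(2 * χ ^ 2 * ⟪w, Δw⟫_ℝ) = χ ^ 2 * (2 * -⟪w, Δw⟫_ℝ) := by ring
    _ ≤ χ ^ 2 * (2 * (‖w‖ * (M * (1 + ‖w‖ + nt)))) := by gcongr
    _ ≤ χ ^ 2 * (nt ^ 2 + ((1 + 2 * M + M ^ 2) * ‖w‖ ^ 2 + M ^ 2)) := by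
        gcongr
        linarith [sq_nonneg (nt - M * ‖w‖), sq_nonneg (‖w‖ - M)]
    _ = χ ^ 2 * nt ^ 2 + χ ^ 2 * ((1 + 2 * M + M ^ 2) * ‖w‖ ^ 2 + M ^ 2) := by ring
    _ ≤ χ ^ 2 * nt ^ 2 + 1 * ((1 + 2 * M + M ^ 2) * ‖w‖ ^ 2 + M ^ 2) := by gcongr
    _ = χ ^ 2 * nt ^ 2 + (1 + 2 * M + M ^ 2) * ‖w‖ ^ 2 + M ^ 2 := by ring

theorem neg_inner_low_order_le {M nw : ℝ} {v Δv : E} (hv : ‖v‖ ≤ M)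
    (hΔv : ‖Δv‖ ≤ M * (1 + nw)) : -(2 * ⟪v, Δv⟫_ℝ) ≤ 2 * M ^ 2 + nw ^ 2 + M ^ 4 := by
  have hinner : -⟪v, Δv⟫_ℝ ≤ M * (M * (1 + nw)) :=
    (neg_le_abs _).trans <| (abs_real_inner_le_norm _ _).trans <|
      mul_le_mul hv hΔv (norm_nonneg _) ((norm_nonneg v).trans hv)
  linarith [sq_nonneg (nw - M ^ 2)]

/-- The weight of the zeroth order term in Bernstein's function, chosen so large that this term
absorbs all gradient terms when the Laplacian inequalities hold with constant `M`. -/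
def bernsteinWeight (M : ℝ) : ℝ := 80 + 2 * M + M ^ 2

theorem bernstein_absorption {M χ ds dt : ℝ} (hχ₀ : 0 ≤ χ) (hχ₁ : χ ≤ 1)
    (hd : ds ^ 2 + dt ^ 2 ≤ 1) {v vs w ws wt vss wss wtt : E} (hv : ‖v‖ ≤ M)
    (hΔv : ‖vss + wt‖ ≤ M * (1 + ‖w‖)) (hΔw : ‖wss + wtt‖ ≤ M * (1 + ‖w‖ + ‖wt‖))
    (hs : (8 * ds ^ 2 - 4 * χ) * ‖w‖ ^ 2 - 16 * χ * ds * ⟪w, ws⟫_ℝ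
      + 2 * χ ^ 2 * (‖ws‖ ^ 2 + ⟪w, wss⟫_ℝ)
      + 2 * bernsteinWeight M * (‖vs‖ ^ 2 + ⟪v, vss⟫_ℝ) ≤ 0)
    (ht : (8 * dt ^ 2 - 4 * χ) * ‖w‖ ^ 2 - 16 * χ * dt * ⟪w, wt⟫_ℝ
      + 2 * χ ^ 2 * (‖wt‖ ^ 2 + ⟪w, wtt⟫_ℝ)
      + 2 * bernsteinWeight M * (‖w‖ ^ 2 + ⟪v, wt⟫_ℝ) ≤ 0) :
    ‖w‖ ^ 2 ≤ M ^ 2 + bernsteinWeight M * (2 * M ^ 2 + M ^ 4) := by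
  have hM : 0 ≤ M := (norm_nonneg v).trans hv
  have hA : 0 ≤ bernsteinWeight M := by unfold bernsteinWeight; positivity
  have htop := neg_inner_top_order_le hM hχ₀ hχ₁ hΔw
  have hlow := mul_le_mul_of_nonneg_left (neg_inner_low_order_le hv hΔv) hA
  rw [inner_add_right] at htop hlow
  have hcross : (64 * ds ^ 2 + 64 * dt ^ 2) * ‖w‖ ^ 2 ≤ 64 * ‖w‖ ^ 2 := by gcongr; linarith
  have hχw : 8 * χ * ‖w‖ ^ 2 ≤ 8 * ‖w‖ ^ 2 := by gcongr; linarith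
  have hds : 0 ≤ (8 * ds ^ 2 + 8 * dt ^ 2) * ‖w‖ ^ 2 := by positivity
  have hvs : 0 ≤ 2 * bernsteinWeight M * ‖vs‖ ^ 2 := by positivity
  have hws : 0 ≤ χ ^ 2 * ‖ws‖ ^ 2 := by positivity
  have habsorb : (bernsteinWeight M - (73 + 2 * M + M ^ 2)) * ‖w‖ ^ 2 ≤
      M ^ 2 + bernsteinWeight M * (2 * M ^ 2 + M ^ 4) := by
    linarith [cutoff_cross_term_le χ ds w ws, cutoff_cross_term_le χ dt w wt]
  have hweight : bernsteinWeight M - (73 + 2 * M + M ^ 2) = 7 := by unfold bernsteinWeight; ring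
  rw [hweight] at habsorb
  linarith [sq_nonneg ‖w‖]

/-- The cutoff `R² - |p - c|²`, positive exactly on the open Euclidean disc of radius `R` about
`c`. -/
def discCutoff (c : ℝ × ℝ) (R : ℝ) (p : ℝ × ℝ) : ℝ :=
  R ^ 2 - ((p.1 - c.1) ^ 2 + (p.2 - c.2) ^ 2)

theorem continuous_discCutoff (c : ℝ × ℝ) (R : ℝ) : Continuous (discCutoff c R) := by
  unfold discCutoff
  fun_prop

theorem abs_sub_le_of_discCutoff_nonneg {c p : ℝ × ℝ} {R : ℝ} (hR : 0 ≤ R)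
    (hp : 0 ≤ discCutoff c R p) : |p.1 - c.1| ≤ R ∧ |p.2 - c.2| ≤ R := by
  unfold discCutoff at hp
  exact ⟨abs_le_of_sq_le_sq (by linarith [sq_nonneg (p.2 - c.2)]) hR,
    abs_le_of_sq_le_sq (by linarith [sq_nonneg (p.1 - c.1)]) hR⟩

theorem isCompact_discCutoff_nonneg (a : ℝ) (c : ℝ × ℝ) {R : ℝ} (hR : 0 ≤ R) :
    IsCompact {p : ℝ × ℝ | a ≤ p.1 ∧ 0 ≤ discCutoff c R p} := by
  refine (isCompact_Icc.prod isCompact_Icc :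
    IsCompact (Icc (c.1 - R) (c.1 + R) ×ˢ Icc (c.2 - R) (c.2 + R))).of_isClosed_subset
    ((isClosed_le continuous_const continuous_fst).inter
      (isClosed_le continuous_const (continuous_discCutoff c R))) fun p hp => ?_
  obtain ⟨h₁, h₂⟩ := abs_sub_le_of_discCutoff_nonneg hR hp.2
  rw [abs_le] at h₁ h₂
  exact ⟨⟨by linarith, by linarith⟩, by linarith, by linarith⟩

/-- Bernstein's function `χ²|∂_t v|² + A|v|²` for the disc of radius `R` about `c`. -/
noncomputable def bernsteinFun (J : Set ℝ) (v : ℝ × ℝ → E) (c : ℝ × ℝ) (R A : ℝ) (p : ℝ × ℝ) : ℝ :=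
  discCutoff c R p ^ 2 * ‖pdt (strip J) v p‖ ^ 2 + A * ‖v p‖ ^ 2

variable {J : Set ℝ} {v : ℝ × ℝ → E} {c : ℝ × ℝ} {R A M : ℝ}

theorem continuousOn_bernsteinFun (hJ : UniqueDiffOn ℝ J)
    (hv : ContDiffOn ℝ (⊤ : ℕ∞) v (strip J)) :
    ContinuousOn (bernsteinFun J v c R A) (strip J) :=
  (((continuous_discCutoff c R).continuousOn.pow 2).mul
    ((contDiffOn_pdt (uniqueDiffOn_strip hJ) hv).continuousOn.norm.pow 2)).add
    (continuousOn_const.mul (hv.continuousOn.norm.pow 2))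

theorem bernstein_second_order_s (hJ : UniqueDiffOn ℝ J) (hv : ContDiffOn ℝ (⊤ : ℕ∞) v (strip J))
    {p : ℝ × ℝ} (hJp : J ∈ 𝓝[≥] p.1)
    (hbdry : J ∈ 𝓝 p.1 ∨ p.1 = c.1 ∧ ⟪v p, pds (strip J) v p⟫_ℝ = 0 ∧
      ⟪pdt (strip J) v p, pds (strip J) (pdt (strip J) v) p⟫_ℝ = 0)
    (hmax : IsLocalMaxOn (bernsteinFun J v c R A) (strip J) p) :
    (8 * (p.1 - c.1) ^ 2 - 4 * discCutoff c R p) * ‖pdt (strip J) v p‖ ^ 2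
      - 16 * discCutoff c R p * (p.1 - c.1) *
        ⟪pdt (strip J) v p, pds (strip J) (pdt (strip J) v) p⟫_ℝ
      + 2 * discCutoff c R p ^ 2 * (‖pds (strip J) (pdt (strip J) v) p‖ ^ 2
        + ⟪pdt (strip J) v p, pds (strip J) (pds (strip J) (pdt (strip J) v)) p⟫_ℝ)
      + 2 * A * (‖pds (strip J) v p‖ ^ 2 + ⟪v p, pds (strip J) (pds (strip J) v) p⟫_ℝ) ≤ 0 := by
  obtain ⟨s, t⟩ := p
  have hS := uniqueDiffOn_strip hJ
  have hvt := contDiffOn_pdt hS hv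
  have hsJ : s ∈ J := mem_of_mem_nhdsWithin self_mem_Ici hJp
  have hcutoff (s' : ℝ) : R ^ 2 - (t - c.2) ^ 2 - (s' - c.1) ^ 2 = discCutoff c R (s', t) := by
    simp only [discCutoff]
    ring
  have hline : Tendsto (fun s' => (s', t)) (𝓝[J] s) (𝓝[strip J] (s, t)) :=
    (by fun_prop : Continuous fun s' : ℝ => (s', t)).continuousWithinAt.tendsto_nhdsWithin
      fun _ h => mk_mem_prod h (mem_univ t)
  have hsecond := second_deriv_cutoff_energy_nonpos (σ := c.1) (e := R ^ 2 - (t - c.2) ^ 2)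
    (A := A) hJp hbdry
    (fun s' hs' => hasDerivWithinAt_line_pds (hv.differentiableOn (by simp)) hs' t)
    (fun s' hs' => hasDerivWithinAt_line_pds (hvt.differentiableOn (by simp)) hs' t)
    (hasDerivWithinAt_line_pds ((contDiffOn_pds hS hv).differentiableOn (by simp)) hsJ t)
    (hasDerivWithinAt_line_pds ((contDiffOn_pds hS hvt).differentiableOn (by simp)) hsJ t)
    (by simp only [hcutoff]; exact hline.eventually hmax)
  simpa only [hcutoff] using hsecond

theorem bernstein_second_order_t (hJ : UniqueDiffOn ℝ J) (hv : ContDiffOn ℝ (⊤ : ℕ∞) v (strip J))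
    {p : ℝ × ℝ} (hp : p.1 ∈ J) (hmax : IsLocalMaxOn (bernsteinFun J v c R A) (strip J) p) :
    (8 * (p.2 - c.2) ^ 2 - 4 * discCutoff c R p) * ‖pdt (strip J) v p‖ ^ 2
      - 16 * discCutoff c R p * (p.2 - c.2) *
        ⟪pdt (strip J) v p, pdt (strip J) (pdt (strip J) v) p⟫_ℝ
      + 2 * discCutoff c R p ^ 2 * (‖pdt (strip J) (pdt (strip J) v) p‖ ^ 2
        + ⟪pdt (strip J) v p, pdt (strip J) (pdt (strip J) (pdt (strip J) v)) p⟫_ℝ)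
      + 2 * A * (‖pdt (strip J) v p‖ ^ 2 + ⟪v p, pdt (strip J) (pdt (strip J) v) p⟫_ℝ) ≤ 0 := by
  obtain ⟨s, t⟩ := p
  have hS := uniqueDiffOn_strip hJ
  have hvt := contDiffOn_pdt hS hv
  have hcutoff (t' : ℝ) : R ^ 2 - (s - c.1) ^ 2 - (t' - c.2) ^ 2 = discCutoff c R (s, t') := by
    simp only [discCutoff]
    ring
  have hline : Tendsto (fun t' => (s, t')) (𝓝[univ] t) (𝓝[strip J] (s, t)) :=
    (by fun_prop : Continuous fun t' : ℝ => (s, t')).continuousWithinAt.tendsto_nhdsWithin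
      fun _ h => mk_mem_prod hp h
  have hsecond := second_deriv_cutoff_energy_nonpos (J := univ) (σ := c.2)
    (e := R ^ 2 - (s - c.1) ^ 2) (A := A) univ_mem (.inl univ_mem)
    (fun t' _ => (hasDerivAt_line_pdt (hv.differentiableOn (by simp)) hp t').hasDerivWithinAt)
    (fun t' _ => (hasDerivAt_line_pdt (hvt.differentiableOn (by simp)) hp t').hasDerivWithinAt)
    (hasDerivAt_line_pdt (hvt.differentiableOn (by simp)) hp t).hasDerivWithinAt
    (hasDerivAt_line_pdt ((contDiffOn_pdt hS hvt).differentiableOn (by simp)) hp t).hasDerivWithinAt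
    (by simp only [hcutoff]; exact hline.eventually hmax)
  simpa only [hcutoff] using hsecond

theorem cutoff_sq_mul_pdt_sq_le_of_isLocalMaxOn (hJ : UniqueDiffOn ℝ J)
    (hv : ContDiffOn ℝ (⊤ : ℕ∞) v (strip J)) (hR₀ : 0 ≤ R) (hR₁ : R ≤ 1) {p : ℝ × ℝ}
    (hJp : J ∈ 𝓝[≥] p.1) (hp : 0 ≤ discCutoff c R p)
    (hbdry : J ∈ 𝓝 p.1 ∨ p.1 = c.1 ∧ ⟪v p, pds (strip J) v p⟫_ℝ = 0 ∧
      ⟪pdt (strip J) v p, pds (strip J) (pdt (strip J) v) p⟫_ℝ = 0)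
    (hvM : ‖v p‖ ≤ M) (hΔv : ‖lap (strip J) v p‖ ≤ M * (1 + ‖pdt (strip J) v p‖))
    (hΔvt : ‖lap (strip J) (pdt (strip J) v) p‖ ≤
      M * (1 + ‖pdt (strip J) v p‖ + ‖pdt (strip J) (pdt (strip J) v) p‖))
    (hmax : IsLocalMaxOn (bernsteinFun J v c R (bernsteinWeight M)) (strip J) p) :
    discCutoff c R p ^ 2 * ‖pdt (strip J) v p‖ ^ 2 ≤
      M ^ 2 + bernsteinWeight M * (2 * M ^ 2 + M ^ 4) := by
  have hR_sq : R ^ 2 ≤ 1 := pow_le_one₀ hR₀ hR₁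
  have hχ : discCutoff c R p ≤ 1 := by
    unfold discCutoff
    linarith [sq_nonneg (p.1 - c.1), sq_nonneg (p.2 - c.2)]
  have hdist : (p.1 - c.1) ^ 2 + (p.2 - c.2) ^ 2 ≤ 1 := by unfold discCutoff at hp; linarith
  calc discCutoff c R p ^ 2 * ‖pdt (strip J) v p‖ ^ 2 ≤ ‖pdt (strip J) v p‖ ^ 2 :=
        mul_le_of_le_one_left (sq_nonneg _) (pow_le_one₀ hp hχ)
    _ ≤ _ := bernstein_absorption hp hχ hdist hvM hΔv hΔvt
        (bernstein_second_order_s hJ hv hJp hbdry hmax)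
        (bernstein_second_order_t hJ hv (mem_of_mem_nhdsWithin self_mem_Ici hJp) hmax)

variable {a b : ℝ}

theorem exists_isLocalMaxOn_bernsteinFun (hv : ContDiffOn ℝ (⊤ : ℕ∞) v (strip (Ico a b)))
    (hR : 0 ≤ R) (hb : c.1 + R < b) {p : ℝ × ℝ} (hp : p ∈ strip (Ico a b))
    (hpR : 0 ≤ discCutoff c R p) :
    ∃ q ∈ strip (Ico a b), 0 ≤ discCutoff c R q ∧
      bernsteinFun (Ico a b) v c R A p ≤ bernsteinFun (Ico a b) v c R A q ∧
      (0 < discCutoff c R q →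
        IsLocalMaxOn (bernsteinFun (Ico a b) v c R A) (strip (Ico a b)) q) := by
  have hsub : {q : ℝ × ℝ | a ≤ q.1 ∧ 0 ≤ discCutoff c R q} ⊆ strip (Ico a b) := fun q hq =>
    ⟨⟨hq.1, by linarith [(abs_le.1 (abs_sub_le_of_discCutoff_nonneg hR hq.2).1).2]⟩, mem_univ _⟩
  obtain ⟨q, hq, hmax⟩ := (isCompact_discCutoff_nonneg a c hR).exists_isMaxOn ⟨p, hp.1.1, hpR⟩
    ((continuousOn_bernsteinFun (c := c) (R := R) (A := A) (uniqueDiffOn_Ico a b) hv).mono hsub)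
  refine ⟨q, hsub hq, hq.2, hmax ⟨hp.1.1, hpR⟩, fun hpos => ?_⟩
  have hnhds := (isOpen_lt continuous_const (continuous_discCutoff c R)).mem_nhds hpos
  filter_upwards [mem_nhdsWithin_of_mem_nhds hnhds, self_mem_nhdsWithin] with x hx hxJ
  exact hmax ⟨hxJ.1.1, le_of_lt hx⟩

theorem bernstein_estimate (hR₀ : 0 < R) (hR₁ : R ≤ 1) (hb : c.1 + R < b)
    (hv : ContDiffOn ℝ (⊤ : ℕ∞) v (strip (Ico a b)))
    (hbdry : a < c.1 - R ∨ a = c.1 ∧ ∀ t, ⟪v (a, t), pds (strip (Ico a b)) v (a, t)⟫_ℝ = 0 ∧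
      ⟪pdt (strip (Ico a b)) v (a, t),
        pds (strip (Ico a b)) (pdt (strip (Ico a b)) v) (a, t)⟫_ℝ = 0)
    (hvM : ∀ p ∈ strip (Ico a b), ‖v p‖ ≤ M)
    (hΔv : ∀ p ∈ strip (Ico a b),
      ‖lap (strip (Ico a b)) v p‖ ≤ M * (1 + ‖pdt (strip (Ico a b)) v p‖))
    (hΔvt : ∀ p ∈ strip (Ico a b),
      ‖lap (strip (Ico a b)) (pdt (strip (Ico a b)) v) p‖ ≤
        M * (1 + ‖pdt (strip (Ico a b)) v p‖ +
          ‖pdt (strip (Ico a b)) (pdt (strip (Ico a b)) v) p‖))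
    {p : ℝ × ℝ} (hp : p ∈ strip (Ico a b))
    (hpc : (p.1 - c.1) ^ 2 + (p.2 - c.2) ^ 2 ≤ R ^ 2 / 4) :
    (3 / 4 * R ^ 2) ^ 2 * ‖pdt (strip (Ico a b)) v p‖ ^ 2 ≤
      M ^ 2 + bernsteinWeight M * (3 * M ^ 2 + M ^ 4) := by
  have hM : 0 ≤ M := (norm_nonneg _).trans (hvM p hp)
  have hA : 0 ≤ bernsteinWeight M := by unfold bernsteinWeight; positivity
  have hpR : 3 / 4 * R ^ 2 ≤ discCutoff c R p := by unfold discCutoff; linarith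
  obtain ⟨q, hq, hqR, hpq, hmax⟩ := exists_isLocalMaxOn_bernsteinFun (A := bernsteinWeight M) hv
    hR₀.le hb hp (le_trans (by positivity) hpR)
  have hq_bdry : Ico a b ∈ 𝓝 q.1 ∨ q.1 = c.1 ∧ ⟪v q, pds (strip (Ico a b)) v q⟫_ℝ = 0 ∧
      ⟪pdt (strip (Ico a b)) v q, pds (strip (Ico a b)) (pdt (strip (Ico a b)) v) q⟫_ℝ = 0 := by
    rcases hq.1.1.eq_or_lt with haq | haq
    · rcases hbdry with ha | ⟨ha, hneumann⟩
      · linarith [(abs_le.1 (abs_sub_le_of_discCutoff_nonneg hR₀.le hqR).1).1]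
      · obtain ⟨s, t⟩ := q
        obtain rfl : a = s := haq
        exact .inr ⟨ha, hneumann t⟩
    · exact .inl (Ico_mem_nhds haq hq.1.2)
  have hq_grad : discCutoff c R q ^ 2 * ‖pdt (strip (Ico a b)) v q‖ ^ 2 ≤
      M ^ 2 + bernsteinWeight M * (2 * M ^ 2 + M ^ 4) := by
    rcases hqR.eq_or_lt with hzero | hpos
    · rw [← hzero, zero_pow two_ne_zero, zero_mul]
      positivity
    · exact cutoff_sq_mul_pdt_sq_le_of_isLocalMaxOn (uniqueDiffOn_Ico a b) hv hR₀.le hR₁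
        (Ico_mem_nhdsGE_of_mem hq.1) hqR hq_bdry (hvM q hq) (hΔv q hq) (hΔvt q hq) (hmax hpos)
  calc (3 / 4 * R ^ 2) ^ 2 * ‖pdt (strip (Ico a b)) v p‖ ^ 2
      ≤ discCutoff c R p ^ 2 * ‖pdt (strip (Ico a b)) v p‖ ^ 2 + bernsteinWeight M * ‖v p‖ ^ 2 :=
        le_add_of_le_of_nonneg (by gcongr) (by positivity)
    _ ≤ discCutoff c R q ^ 2 * ‖pdt (strip (Ico a b)) v q‖ ^ 2 + bernsteinWeight M * ‖v q‖ ^ 2 :=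
        hpq
    _ ≤ M ^ 2 + bernsteinWeight M * (2 * M ^ 2 + M ^ 4) + bernsteinWeight M * M ^ 2 := by
        gcongr
        exact hvM q hq
    _ = M ^ 2 + bernsteinWeight M * (3 * M ^ 2 + M ^ 4) := by ring

end Bernstein

section SmoothPeriodic

variable {W E : Type*} [NormedAddCommGroup W] [NormedSpace ℝ W] [NormedAddCommGroup E]
  [NormedSpace ℝ E]

/-- Smooth functions `G (t, w)` of time and position which are 1-periodic in time. -/
structure IsSmoothPeriodic (G : ℝ × W → E) : Prop where
  contDiff : ContDiff ℝ (⊤ : ℕ∞) G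
  periodic : ∀ t w, G (t + 1, w) = G (t, w)

namespace IsSmoothPeriodic

variable {G : ℝ × W → E}

theorem comp_add_one (hG : IsSmoothPeriodic G) : (fun p => G (p + (1, 0))) = G :=
  funext fun ⟨t, w⟩ => by simpa using hG.periodic t w

protected theorem fderiv (hG : IsSmoothPeriodic G) : IsSmoothPeriodic (fderiv ℝ G) where
  contDiff := hG.contDiff.fderiv_right (by simp)
  periodic t w := by
    simpa [hG.comp_add_one] using
      (fderiv_comp_add_right (𝕜 := ℝ) (f := G) (x := (t, w)) (1, 0)).symm

theorem periodic_iteratedFDeriv (hG : IsSmoothPeriodic G) (i : ℕ) (w : W) :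
    Function.Periodic (fun t => iteratedFDeriv ℝ i G (t, w)) 1 := fun t => by
  simpa [hG.comp_add_one] using
    (iteratedFDeriv_comp_add_right (𝕜 := ℝ) (f := G) i (1, 0) (t, w)).symm

theorem exists_norm_iteratedFDeriv_le [ProperSpace W] (hG : IsSmoothPeriodic G) (i : ℕ) :
    ∃ C, ∀ t w, ‖w‖ ≤ 1 → ‖iteratedFDeriv ℝ i G (t, w)‖ ≤ C := by
  have hcont : Continuous (iteratedFDeriv ℝ i G) :=
    hG.contDiff.continuous_iteratedFDeriv (by exact_mod_cast le_top)
  obtain ⟨C, hC⟩ := ((isCompact_Icc (a := (0 : ℝ)) (b := 1)).prod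
    (isCompact_closedBall (0 : W) 1)).exists_bound_of_continuousOn hcont.continuousOn
  refine ⟨C, fun t w hw => ?_⟩
  obtain ⟨t', ht', heq⟩ := (hG.periodic_iteratedFDeriv i w).exists_mem_Ico₀ one_pos t
  exact (congrArg norm heq).trans_le <|
    hC (t', w) ⟨Ico_subset_Icc_self ht', by simpa using hw⟩

end IsSmoothPeriodic

end SmoothPeriodic

section ChainRule

variable {α X W E : Type*} [NormedAddCommGroup X] [NormedSpace ℝ X] [NormedAddCommGroup W]
  [NormedSpace ℝ W] [NormedAddCommGroup E] [NormedSpace ℝ E] {l : Filter α}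
  {A : α → Set X} {x : α → X} {G : ℝ × W → E}

theorem isBigO_iteratedFDerivWithin_comp [ProperSpace W] (hG : IsSmoothPeriodic G)
    (hA : ∀ a, UniqueDiffOn ℝ (A a)) {γ : α → X → ℝ × W}
    (hγ : ∀ a, ContDiffOn ℝ (⊤ : ℕ∞) (γ a) (A a)) (hx : ∀ a, x a ∈ A a)
    (hball : ∀ a, ‖(γ a (x a)).2‖ ≤ 1) {n : ℕ}
    (h : ∀ i, 1 ≤ i → i ≤ n →
      (fun a => iteratedFDerivWithin ℝ i (γ a) (A a) (x a)) =O[l] fun _ => (1 : ℝ)) :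
    (fun a => iteratedFDerivWithin ℝ n (fun y => G (γ a y)) (A a) (x a)) =O[l]
      fun _ => (1 : ℝ) := by
  choose C hC using hG.exists_norm_iteratedFDeriv_le
  let B := ∑ i ∈ Finset.range (n + 1), |C i|
  let D (a : α) := 1 + ∑ i ∈ Finset.Icc 1 n, ‖iteratedFDerivWithin ℝ i (γ a) (A a) (x a)‖
  have hD : D =O[l] fun _ => (1 : ℝ) :=
    (Asymptotics.isBigO_refl _ _).add <| Asymptotics.IsBigO.fun_sum fun i hi =>
      (h i (Finset.mem_Icc.1 hi).1 (Finset.mem_Icc.1 hi).2).norm_left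
  have hDn : (fun a => n.factorial * B * D a ^ n) =O[l] fun _ => (1 : ℝ) := by
    simpa using (hD.pow n).const_mul_left (n.factorial * B)
  refine (Asymptotics.isBigO_of_le l fun a => ?_).trans hDn
  have hD1 : 1 ≤ D a := le_add_of_nonneg_right (Finset.sum_nonneg fun _ _ => norm_nonneg _)
  refine (norm_iteratedFDerivWithin_comp_le (n := n) (N := (⊤ : ℕ∞)) (t := univ)
    hG.contDiff.contDiffOn (hγ a) (by exact_mod_cast le_top) uniqueDiffOn_univ (hA a)
    (fun _ _ => mem_univ _) (hx a) (C := B) (D := D a) (fun i hi => ?_)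
    fun i hi₁ hi₂ => ?_).trans (le_abs_self _)
  · rw [iteratedFDerivWithin_univ]
    exact ((hC i _ _ (hball a)).trans (le_abs_self _)).trans <|
      Finset.single_le_sum (f := fun i => |C i|) (fun _ _ => abs_nonneg _)
        (Finset.mem_range.2 (Nat.lt_succ_of_le hi))
  · calc ‖iteratedFDerivWithin ℝ i (γ a) (A a) (x a)‖
        ≤ ∑ i ∈ Finset.Icc 1 n, ‖iteratedFDerivWithin ℝ i (γ a) (A a) (x a)‖ :=
          Finset.single_le_sum
            (f := fun i => ‖iteratedFDerivWithin ℝ i (γ a) (A a) (x a)‖)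
            (fun _ _ => norm_nonneg _) (Finset.mem_Icc.2 ⟨hi₁, hi₂⟩)
      _ ≤ D a := le_add_of_nonneg_left zero_le_one
      _ ≤ D a ^ i := le_self_pow₀ hD1 (by omega)

theorem norm_iteratedFDerivWithin_affine_le {S : Set X} (hS : UniqueDiffOn ℝ S) (ℓ : X →L[ℝ] E)
    (c : E) {i : ℕ} (hi : 1 ≤ i) {y : X} (hy : y ∈ S) :
    ‖iteratedFDerivWithin ℝ i (fun y => ℓ y + c) S y‖ ≤ ‖ℓ‖ := by
  obtain ⟨j, rfl⟩ := Nat.exists_eq_add_of_le' hi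
  have hderiv : EqOn (fderivWithin ℝ (fun y => ℓ y + c) S) (fun _ => ℓ) S := fun y hy =>
    ((ℓ.hasFDerivAt.add_const c).hasFDerivWithinAt).fderivWithin (hS y hy)
  rw [← norm_iteratedFDerivWithin_fderivWithin hS hy, iteratedFDerivWithin_congr hderiv hy]
  rcases eq_or_ne j 0 with rfl | hj
  · simp
  · simp [iteratedFDerivWithin_const_of_ne hj]

theorem isBigO_iteratedFDerivWithin_comp_affine [ProperSpace W] (hG : IsSmoothPeriodic G)
    (hA : ∀ a, UniqueDiffOn ℝ (A a)) (ℓ : X →L[ℝ] ℝ) (τ : α → ℝ) {z : α → X → W}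
    (hz : ∀ a, ContDiffOn ℝ (⊤ : ℕ∞) (z a) (A a)) (hx : ∀ a, x a ∈ A a)
    (hball : ∀ a, ‖z a (x a)‖ ≤ 1) {n : ℕ}
    (h : ∀ i, 1 ≤ i → i ≤ n →
      (fun a => iteratedFDerivWithin ℝ i (z a) (A a) (x a)) =O[l] fun _ => (1 : ℝ)) :
    (fun a => iteratedFDerivWithin ℝ n (fun y => G (ℓ y + τ a, z a y)) (A a) (x a)) =O[l]
      fun _ => (1 : ℝ) := by
  have haff (a : α) : ContDiffOn ℝ (⊤ : ℕ∞) (fun y => ℓ y + τ a) (A a) :=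
    (ℓ.contDiff.add contDiff_const).contDiffOn
  refine isBigO_iteratedFDerivWithin_comp hG hA (fun a => (haff a).prodMk (hz a)) hx hball
    fun i hi₁ hi₂ => ?_
  have hsum : (fun a => ‖ℓ‖ + ‖iteratedFDerivWithin ℝ i (z a) (A a) (x a)‖) =O[l]
      fun _ => (1 : ℝ) :=
    (Asymptotics.isBigO_const_const _ one_ne_zero _).add (h i hi₁ hi₂).norm_left
  refine (Asymptotics.isBigO_of_le l fun a => ?_).trans hsum
  rw [iteratedFDerivWithin_prodMk (haff a _ (hx a)) (hz a _ (hx a)) (hA a) (hx a)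
    (by exact_mod_cast le_top), ContinuousMultilinearMap.opNorm_prod,
    Real.norm_of_nonneg (by positivity)]
  exact max_le (le_add_of_le_of_nonneg (norm_iteratedFDerivWithin_affine_le (hA a) ℓ _ hi₁ (hx a))
    (norm_nonneg _)) (le_add_of_nonneg_left (norm_nonneg _))

end ChainRule

theorem isBigO_one_add_norm {α E : Type*} [SeminormedAddCommGroup E] {l : Filter α} (f : α → E) :
    (fun _ => (1 : ℝ)) =O[l] fun a => 1 + ‖f a‖ :=
  Asymptotics.isBigO_of_le l fun a => by
    rw [norm_one, Real.norm_of_nonneg (by positivity)]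
    exact le_add_of_nonneg_right (norm_nonneg _)

theorem isBigO_self_one_add_norm {α E : Type*} [SeminormedAddCommGroup E] {l : Filter α}
    (f : α → E) : f =O[l] fun a => 1 + ‖f a‖ :=
  Asymptotics.isBigO_of_le l fun a => by
    rw [Real.norm_of_nonneg (by positivity)]
    exact le_add_of_nonneg_left zero_le_one

section Leibniz

variable {α E F : Type*} [NormedAddCommGroup E] [NormedSpace ℝ E] [NormedAddCommGroup F]
  [NormedSpace ℝ F] {l : Filter α} {θ : α → ℝ}

theorem isBigO_iteratedDeriv_clm_apply {B : α → ℝ → E →L[ℝ] F} {g : α → ℝ → E}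
    (hB : ∀ a, ContDiff ℝ (⊤ : ℕ∞) (B a)) (hg : ∀ a, ContDiff ℝ (⊤ : ℕ∞) (g a)) {n : ℕ}
    {Q : α → ℝ}
    (h : ∀ i ≤ n, (fun a => ‖iteratedDeriv i (B a) (θ a)‖ * ‖iteratedDeriv (n - i) (g a) (θ a)‖)
      =O[l] Q) :
    (fun a => iteratedDeriv n (fun t => B a t (g a t)) (θ a)) =O[l] Q := by
  have hsum : (fun a => ∑ i ∈ Finset.range (n + 1), (n.choose i : ℝ) *
      (‖iteratedDeriv i (B a) (θ a)‖ * ‖iteratedDeriv (n - i) (g a) (θ a)‖)) =O[l] Q :=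
    Asymptotics.IsBigO.fun_sum fun i hi =>
      (h i (Nat.lt_succ_iff.1 (Finset.mem_range.1 hi))).const_mul_left _
  refine (Asymptotics.isBigO_of_le l fun a => le_trans ?_ (le_abs_self _)).trans hsum
  simpa only [norm_iteratedFDeriv_eq_norm_iteratedDeriv, mul_assoc] using
    norm_iteratedFDeriv_clm_apply (𝕜 := ℝ) (n := n) (hB a) (hg a) (θ a)
      (by exact_mod_cast le_top)

variable {B : α → ℝ → E →L[ℝ] F} {u : α → ℝ → E} {k : ℕ}

theorem isBigO_iteratedDeriv_clm_apply_top (hB : ∀ a, ContDiff ℝ (⊤ : ℕ∞) (B a))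
    (hu : ∀ a, ContDiff ℝ (⊤ : ℕ∞) (u a))
    (hBk : ∀ i ≤ k, (fun a => iteratedDeriv i (B a) (θ a)) =O[l] fun _ => (1 : ℝ))
    (huk : ∀ j < k, (fun a => iteratedDeriv j (u a) (θ a)) =O[l] fun _ => (1 : ℝ)) :
    (fun a => iteratedDeriv k (fun t => B a t (u a t)) (θ a)) =O[l]
      fun a => 1 + ‖iteratedDeriv k (u a) (θ a)‖ := by
  refine isBigO_iteratedDeriv_clm_apply hB hu fun i hi => ?_
  have hfactor : (fun a => iteratedDeriv (k - i) (u a) (θ a)) =O[l]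
      fun a => 1 + ‖iteratedDeriv k (u a) (θ a)‖ := by
    rcases Nat.eq_zero_or_pos i with rfl | hi₀
    · exact isBigO_self_one_add_norm _
    · exact (huk (k - i) (by omega)).trans (isBigO_one_add_norm _)
  simpa using (hBk i hi).norm_left.mul hfactor.norm_left

theorem isBigO_iteratedDeriv_succ_clm_apply_top (hB : ∀ a, ContDiff ℝ (⊤ : ℕ∞) (B a))
    (hu : ∀ a, ContDiff ℝ (⊤ : ℕ∞) (u a)) (hk : 1 ≤ k)
    (hBk : ∀ i ≤ k, (fun a => iteratedDeriv i (B a) (θ a)) =O[l] fun _ => (1 : ℝ))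
    (hBk' : (fun a => iteratedDeriv (k + 1) (B a) (θ a)) =O[l]
      fun a => 1 + ‖iteratedDeriv k (u a) (θ a)‖)
    (huk : ∀ j < k, (fun a => iteratedDeriv j (u a) (θ a)) =O[l] fun _ => (1 : ℝ)) :
    (fun a => iteratedDeriv (k + 1) (fun t => B a t (u a t)) (θ a)) =O[l]
      fun a => 1 + ‖iteratedDeriv k (u a) (θ a)‖ + ‖iteratedDeriv (k + 1) (u a) (θ a)‖ := by
  have hQ₀ : (fun a => 1 + ‖iteratedDeriv k (u a) (θ a)‖) =O[l]
      fun a => 1 + ‖iteratedDeriv k (u a) (θ a)‖ + ‖iteratedDeriv (k + 1) (u a) (θ a)‖ :=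
    Asymptotics.isBigO_of_le l fun a => by
      rw [Real.norm_of_nonneg (by positivity), Real.norm_of_nonneg (by positivity)]
      exact le_add_of_nonneg_right (norm_nonneg _)
  have hQ₁ : (fun a => iteratedDeriv (k + 1) (u a) (θ a)) =O[l]
      fun a => 1 + ‖iteratedDeriv k (u a) (θ a)‖ + ‖iteratedDeriv (k + 1) (u a) (θ a)‖ :=
    Asymptotics.isBigO_of_le l fun a => by
      rw [Real.norm_of_nonneg (by positivity)]
      exact le_add_of_nonneg_left (by positivity)
  refine isBigO_iteratedDeriv_clm_apply hB hu fun i hi => ?_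
  rcases hi.lt_or_eq with hi | rfl
  · have hfactor : (fun a => iteratedDeriv (k + 1 - i) (u a) (θ a)) =O[l]
        fun a => 1 + ‖iteratedDeriv k (u a) (θ a)‖ + ‖iteratedDeriv (k + 1) (u a) (θ a)‖ := by
      obtain rfl | rfl | hi₂ : i = 0 ∨ i = 1 ∨ 2 ≤ i := by omega
      · exact hQ₁
      · exact (isBigO_self_one_add_norm _).trans hQ₀
      · exact (huk (k + 1 - i) (by omega)).trans ((isBigO_one_add_norm _).trans hQ₀)
    simpa using (hBk i (by omega)).norm_left.mul hfactor.norm_left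
  · have hu₀ := (huk 0 hk).norm_left
    simpa using (hBk'.trans hQ₀).norm_left.mul hu₀

end Leibniz

section Curves

variable {W E F : Type*} [NormedAddCommGroup W] [NormedSpace ℝ W] [NormedAddCommGroup E]
  [NormedSpace ℝ E] [NormedAddCommGroup F] [NormedSpace ℝ F] {G : ℝ × W → F}

theorem IsSmoothPeriodic.contDiff_comp_curve (hG : IsSmoothPeriodic G) (τ : ℝ)
    {y : ℝ → W} (hy : ContDiff ℝ (⊤ : ℕ∞) y) :
    ContDiff ℝ (⊤ : ℕ∞) fun t => G (t + τ, y t) :=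
  hG.contDiff.comp ((contDiff_id.add contDiff_const).prodMk hy)

theorem IsSmoothPeriodic.deriv_comp_curve (hG : IsSmoothPeriodic G) (τ : ℝ) {y : ℝ → W}
    {Ω : ℝ × W → E →L[ℝ] W} {u : ℝ → E} (hy : ContDiff ℝ (⊤ : ℕ∞) y)
    (hyu : deriv y = fun t => Ω (t + τ, y t) (u t)) :
    deriv (fun t => G (t + τ, y t)) = fun t => fderiv ℝ G (t + τ, y t) (1, 0) +
      (fderiv ℝ G (t + τ, y t) ∘L .inr ℝ ℝ W ∘L Ω (t + τ, y t)) (u t) := by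
  ext t
  have hcurve : HasDerivAt (fun t => (t + τ, y t)) ((1 : ℝ), deriv y t) t :=
    ((hasDerivAt_id t).add_const τ).prodMk (hy.differentiable (by simp) t).hasDerivAt
  have hchain : HasDerivAt (fun t => G (t + τ, y t)) (fderiv ℝ G (t + τ, y t) (1, deriv y t)) t :=
    (hG.contDiff.differentiable (by simp) _).hasFDerivAt.comp_hasDerivAt t hcurve
  rw [hchain.deriv, hyu]
  simp [← map_add]

end Curves

section AlongCurves

variable {α W E F : Type*} [NormedAddCommGroup W] [NormedSpace ℝ W] [ProperSpace W]
  [NormedAddCommGroup E] [NormedSpace ℝ E] [NormedAddCommGroup F] [NormedSpace ℝ F]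
  {l : Filter α} {θ τ : α → ℝ} {y : α → ℝ → W} {k : ℕ}

theorem isBigO_iteratedDeriv_comp_curve {G : ℝ × W → E} (hG : IsSmoothPeriodic G)
    (hy : ∀ a, ContDiff ℝ (⊤ : ℕ∞) (y a)) (hball : ∀ a, ‖y a (θ a)‖ ≤ 1)
    (hyk : ∀ i, 1 ≤ i → i ≤ k → (fun a => iteratedDeriv i (y a) (θ a)) =O[l] fun _ => (1 : ℝ)) :
    (fun a => iteratedDeriv k (fun t => G (t + τ a, y a t)) (θ a)) =O[l] fun _ => (1 : ℝ) := by
  rw [← Asymptotics.isBigO_norm_left]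
  simp only [← norm_iteratedFDeriv_eq_norm_iteratedDeriv, ← iteratedFDerivWithin_univ]
  refine (isBigO_iteratedFDerivWithin_comp_affine hG (fun _ => uniqueDiffOn_univ)
    (ContinuousLinearMap.id ℝ ℝ) τ (fun a => (hy a).contDiffOn) (fun _ => mem_univ _) hball
    fun i hi₁ hi₂ => ?_).norm_left
  rw [← Asymptotics.isBigO_norm_left]
  simpa only [iteratedFDerivWithin_univ, norm_iteratedFDeriv_eq_norm_iteratedDeriv] using
    (hyk i hi₁ hi₂).norm_left

variable {Ω : ℝ × W → E →L[ℝ] W} {u : α → ℝ → E}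

theorem isBigO_iteratedDeriv_of_deriv_eq (hΩ : IsSmoothPeriodic Ω)
    (hy : ∀ a, ContDiff ℝ (⊤ : ℕ∞) (y a)) (hu : ∀ a, ContDiff ℝ (⊤ : ℕ∞) (u a))
    (hyu : ∀ a, deriv (y a) = fun t => Ω (t + τ a, y a t) (u a t))
    (hball : ∀ a, ‖y a (θ a)‖ ≤ 1)
    (hyk : ∀ i, 1 ≤ i → i ≤ k → (fun a => iteratedDeriv i (y a) (θ a)) =O[l] fun _ => (1 : ℝ))
    (huk : ∀ j ≤ k, (fun a => iteratedDeriv j (u a) (θ a)) =O[l] fun _ => (1 : ℝ)) :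
    (fun a => iteratedDeriv (k + 1) (y a) (θ a)) =O[l] fun _ => (1 : ℝ) := by
  simp only [iteratedDeriv_succ', hyu]
  refine (isBigO_iteratedDeriv_clm_apply_top (fun a => hΩ.contDiff_comp_curve (τ a) (hy a)) hu
    (fun i hi => isBigO_iteratedDeriv_comp_curve hΩ hy hball fun j hj₁ hj₂ =>
      hyk j hj₁ (hj₂.trans hi)) fun j hj => huk j hj.le).trans ?_
  exact (Asymptotics.isBigO_refl _ _).add (huk k le_rfl).norm_left

theorem isBigO_iteratedDeriv_succ_comp_curve {G : ℝ × W → F} (hG : IsSmoothPeriodic G)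
    (hΩ : IsSmoothPeriodic Ω) (hy : ∀ a, ContDiff ℝ (⊤ : ℕ∞) (y a))
    (hu : ∀ a, ContDiff ℝ (⊤ : ℕ∞) (u a))
    (hyu : ∀ a, deriv (y a) = fun t => Ω (t + τ a, y a t) (u a t))
    (hball : ∀ a, ‖y a (θ a)‖ ≤ 1)
    (hyk : ∀ i, 1 ≤ i → i ≤ k → (fun a => iteratedDeriv i (y a) (θ a)) =O[l] fun _ => (1 : ℝ))
    (huk : ∀ j < k, (fun a => iteratedDeriv j (u a) (θ a)) =O[l] fun _ => (1 : ℝ)) :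
    (fun a => iteratedDeriv (k + 1) (fun t => G (t + τ a, y a t)) (θ a)) =O[l]
      fun a => 1 + ‖iteratedDeriv k (u a) (θ a)‖ := by
  have hGt : IsSmoothPeriodic fun p => fderiv ℝ G p (1, 0) :=
    ⟨hG.fderiv.contDiff.clm_apply contDiff_const, fun t w => by rw [hG.fderiv.periodic]⟩
  have hGw : IsSmoothPeriodic fun p => fderiv ℝ G p ∘L .inr ℝ ℝ W ∘L Ω p :=
    ⟨hG.fderiv.contDiff.clm_comp (contDiff_const.clm_comp hΩ.contDiff), fun t w => by
      rw [hG.fderiv.periodic, hΩ.periodic]⟩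
  have hsplit (a : α) : iteratedDeriv (k + 1) (fun t => G (t + τ a, y a t)) (θ a) =
      iteratedDeriv k (fun t => fderiv ℝ G (t + τ a, y a t) (1, 0)) (θ a) +
      iteratedDeriv k (fun t => (fderiv ℝ G (t + τ a, y a t) ∘L .inr ℝ ℝ W ∘L
        Ω (t + τ a, y a t)) (u a t)) (θ a) := by
    rw [iteratedDeriv_succ', hG.deriv_comp_curve (τ a) (hy a) (hyu a)]
    exact iteratedDeriv_fun_add
      ((hGt.contDiff_comp_curve (τ a) (hy a)).contDiffAt.of_le (by exact_mod_cast le_top))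
      (((hGw.contDiff_comp_curve (τ a) (hy a)).clm_apply (hu a)).contDiffAt.of_le
        (by exact_mod_cast le_top))
  simp only [hsplit]
  exact ((isBigO_iteratedDeriv_comp_curve hGt hy hball hyk).trans (isBigO_one_add_norm _)).add <|
    isBigO_iteratedDeriv_clm_apply_top (fun a => hGw.contDiff_comp_curve (τ a) (hy a)) hu
      (fun i hi => isBigO_iteratedDeriv_comp_curve hGw hy hball fun j hj₁ hj₂ =>
        hyk j hj₁ (hj₂.trans hi)) huk

end AlongCurves

section Graphs

variable {W E : Type*} [NormedAddCommGroup W] [NormedSpace ℝ W] [NormedAddCommGroup E]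
  [NormedSpace ℝ E] {A : Set (ℝ × ℝ)} {q : ℝ × W → E} {z : ℝ × ℝ → W}

theorem hasFDerivWithinAt_comp_graph (hq : IsSmoothPeriodic q) (τ : ℝ)
    (hz : DifferentiableOn ℝ z A) {p : ℝ × ℝ} (hp : p ∈ A) :
    HasFDerivWithinAt (fun p => q (p.2 + τ, z p))
      (fderiv ℝ q (p.2 + τ, z p) ∘L
        (ContinuousLinearMap.snd ℝ ℝ ℝ).prod (fderivWithin ℝ z A p)) A p :=
  (hq.contDiff.differentiable (by simp) _).hasFDerivAt.comp_hasFDerivWithinAt p <|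
    (hasFDerivWithinAt_snd.add_const τ).prodMk (hz p hp).hasFDerivWithinAt

theorem pds_comp_graph (hA : UniqueDiffOn ℝ A) (hq : IsSmoothPeriodic q) (τ : ℝ)
    (hz : DifferentiableOn ℝ z A) : EqOn (pds A fun p => q (p.2 + τ, z p))
      (fun p => fderiv ℝ q (p.2 + τ, z p) (0, pds A z p)) A := fun p hp => by
  simp only [pds, (hasFDerivWithinAt_comp_graph hq τ hz hp).fderivWithin (hA p hp)]
  simp

theorem pdt_comp_graph (hA : UniqueDiffOn ℝ A) (hq : IsSmoothPeriodic q) (τ : ℝ)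
    (hz : DifferentiableOn ℝ z A) : EqOn (pdt A fun p => q (p.2 + τ, z p))
      (fun p => fderiv ℝ q (p.2 + τ, z p) (1, pdt A z p)) A := fun p hp => by
  simp only [pdt, (hasFDerivWithinAt_comp_graph hq τ hz hp).fderivWithin (hA p hp)]
  simp

theorem contDiffOn_comp_graph (hq : IsSmoothPeriodic q) (τ : ℝ)
    (hz : ContDiffOn ℝ (⊤ : ℕ∞) z A) : ContDiffOn ℝ (⊤ : ℕ∞) (fun p => q (p.2 + τ, z p)) A :=
  hq.contDiff.comp_contDiffOn ((contDiff_snd.add contDiff_const).contDiffOn.prodMk hz)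

end Graphs

section TangentialPairs

variable {E : Type*} [NormedAddCommGroup E] [NormedSpace ℝ E] {J : Set ℝ}
  {L : E →L[ℝ] E} {F q : ℝ × E → E} {Ω : ℝ × E → E →L[ℝ] E} {τ : ℝ} {z u : ℝ × ℝ → E}

/-- A solution `z` of the Floer equation `∂_s z = L ∂_t z + F(t + τ, z)` in the unit ball, together
with a function `u` which determines `∂_t z = Ω(t + τ, z) u` and solves the same equation with the
inhomogeneity `∂_t (q(t + τ, z))`. It is used with `u = ∂_t z` away from the boundary and with the
logarithmic derivative `u = ∂_t z / z` near the boundary. -/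
structure IsTangentialPair (L : E →L[ℝ] E) (F q : ℝ × E → E) (Ω : ℝ × E → E →L[ℝ] E) (J : Set ℝ)
    (τ : ℝ) (z u : ℝ × ℝ → E) : Prop where
  contDiffOn_fst : ContDiffOn ℝ (⊤ : ℕ∞) z (strip J)
  contDiffOn_snd : ContDiffOn ℝ (⊤ : ℕ∞) u (strip J)
  norm_fst_le_one : ∀ p ∈ strip J, ‖z p‖ ≤ 1
  pds_fst : EqOn (pds (strip J) z) (fun p => L (pdt (strip J) z p) + F (p.2 + τ, z p)) (strip J)
  pds_snd : EqOn (pds (strip J) u)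
    (fun p => L (pdt (strip J) u p) + pdt (strip J) (fun p => q (p.2 + τ, z p)) p) (strip J)
  pdt_fst : EqOn (pdt (strip J) z) (fun p => Ω (p.2 + τ, z p) (u p)) (strip J)

/-- The part of `(L ∂_t + ∂_s) (q(t, z))` which does not involve the tangential derivative `u`. -/
noncomputable def lapForcing (L : E →L[ℝ] E) (F q : ℝ × E → E) (x : ℝ × E) : E :=
  L (fderiv ℝ q x (1, 0)) + fderiv ℝ q x (0, F x)

/-- The coefficient of the tangential derivative `u` in `(L ∂_t + ∂_s) (q(t, z))`. -/
noncomputable def lapCoeff (L : E →L[ℝ] E) (q : ℝ × E → E) (Ω : ℝ × E → E →L[ℝ] E) (x : ℝ × E) :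
    E →L[ℝ] E :=
  (L ∘L fderiv ℝ q x ∘L .inr ℝ ℝ E + fderiv ℝ q x ∘L .inr ℝ ℝ E ∘L L) ∘L Ω x

theorem isSmoothPeriodic_lapForcing (hF : IsSmoothPeriodic F) (hq : IsSmoothPeriodic q) :
    IsSmoothPeriodic (lapForcing L F q) where
  contDiff := (L.contDiff.comp (hq.fderiv.contDiff.clm_apply contDiff_const)).add
    (hq.fderiv.contDiff.clm_apply (contDiff_const.prodMk hF.contDiff))
  periodic t w := by simp only [lapForcing, hq.fderiv.periodic, hF.periodic]

theorem isSmoothPeriodic_lapCoeff (hq : IsSmoothPeriodic q) (hΩ : IsSmoothPeriodic Ω) :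
    IsSmoothPeriodic (lapCoeff L q Ω) where
  contDiff := ((contDiff_const.clm_comp (hq.fderiv.contDiff.clm_comp contDiff_const)).add
    (hq.fderiv.contDiff.clm_comp contDiff_const)).clm_comp hΩ.contDiff
  periodic t w := by simp only [lapCoeff, hq.fderiv.periodic, hΩ.periodic]

namespace IsTangentialPair

theorem lap_iterate_pdt_snd (h : IsTangentialPair L F q Ω J τ z u) (hL : ∀ x, L (L x) = -x)
    (hJ : UniqueDiffOn ℝ J) (hJ' : J ⊆ closure (interior J)) (hq : IsSmoothPeriodic q) (k : ℕ) :
    EqOn (lap (strip J) ((pdt (strip J))^[k] u))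
      ((pdt (strip J))^[k + 1] fun p => lapForcing L F q (p.2 + τ, z p) +
        lapCoeff L q Ω (p.2 + τ, z p) (u p)) (strip J) := by
  have hA := uniqueDiffOn_strip hJ
  have hzd := h.contDiffOn_fst.differentiableOn (by simp)
  refine (lap_iterate_pdt_of_pds_eq hL hA (strip_subset_closure_interior hJ') h.contDiffOn_snd
    (contDiffOn_comp_graph hq τ h.contDiffOn_fst) h.pds_snd k).trans
    (iterate_pdt_congr (fun p hp => ?_) (k + 1))
  have split₁ : fderiv ℝ q (p.2 + τ, z p) (1, Ω (p.2 + τ, z p) (u p)) =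
      fderiv ℝ q (p.2 + τ, z p) (1, 0) +
        fderiv ℝ q (p.2 + τ, z p) (0, Ω (p.2 + τ, z p) (u p)) := by
    simp [← map_add]
  have split₀ (w w' : E) : fderiv ℝ q (p.2 + τ, z p) (0, w + w') =
      fderiv ℝ q (p.2 + τ, z p) (0, w) + fderiv ℝ q (p.2 + τ, z p) (0, w') := by
    simp [← map_add]
  simp only [pdt_comp_graph hA hq τ hzd hp, pds_comp_graph hA hq τ hzd hp, h.pds_fst hp,
    h.pdt_fst hp, lapForcing, lapCoeff, split₁, split₀, map_add, ContinuousLinearMap.comp_apply,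
    add_apply, ContinuousLinearMap.inr_apply]
  abel

theorem deriv_line (h : IsTangentialPair L F q Ω J τ z u) {s : ℝ} (hs : s ∈ J) :
    deriv (fun t => z (s, t)) = fun t => Ω (t + τ, z (s, t)) (u (s, t)) :=
  funext fun t =>
    (hasDerivAt_line_pdt (h.contDiffOn_fst.differentiableOn (by simp)) hs t).deriv.trans
      (h.pdt_fst (mk_mem_prod hs (mem_univ t)))

theorem lap_iterate_pdt_snd_line (h : IsTangentialPair L F q Ω J τ z u) (hL : ∀ x, L (L x) = -x)
    (hJ : UniqueDiffOn ℝ J) (hJ' : J ⊆ closure (interior J)) (hF : IsSmoothPeriodic F)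
    (hq : IsSmoothPeriodic q) (hΩ : IsSmoothPeriodic Ω) (k : ℕ) {p : ℝ × ℝ} (hp : p ∈ strip J) :
    lap (strip J) ((pdt (strip J))^[k] u) p =
      iteratedDeriv (k + 1) (fun t => lapForcing L F q (t + τ, z (p.1, t))) p.2 +
        iteratedDeriv (k + 1) (fun t => lapCoeff L q Ω (t + τ, z (p.1, t)) (u (p.1, t))) p.2 := by
  have hG := contDiffOn_comp_graph (isSmoothPeriodic_lapForcing (L := L) hF hq) τ h.contDiffOn_fst
  have hB := (contDiffOn_comp_graph (isSmoothPeriodic_lapCoeff (L := L) hq hΩ) τ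
    h.contDiffOn_fst).clm_apply h.contDiffOn_snd
  rw [h.lap_iterate_pdt_snd hL hJ hJ' hq k hp,
    iterate_pdt_eq_iteratedDeriv hJ (hG.add hB) (k + 1) hp]
  exact iteratedDeriv_fun_add ((contDiff_line hG hp.1).contDiffAt.of_le (by exact_mod_cast le_top))
    ((contDiff_line hB hp.1).contDiffAt.of_le (by exact_mod_cast le_top))

end IsTangentialPair

end TangentialPairs

section UniformBounds

variable {ι κ X E : Type*} [SeminormedAddCommGroup E] {A : ι → Set X} {f : ι → X → E}

/-- The functions `f i` are bounded on the sets `A i` by a constant which does not depend on `i`. -/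
def UniformlyBounded (A : ι → Set X) (f : ι → X → E) : Prop :=
  ∃ C, ∀ i, ∀ x ∈ A i, ‖f i x‖ ≤ C

theorem UniformlyBounded.isBigO (h : UniformlyBounded A f) {l : Filter κ} {φ : κ → ι} {x : κ → X}
    (hx : ∀ a, x a ∈ A (φ a)) : (fun a => f (φ a) (x a)) =O[l] fun _ => (1 : ℝ) :=
  let ⟨C, hC⟩ := h
  .of_bound C (.of_forall fun a => by simpa using hC _ _ (hx a))

theorem uniformlyBounded_iff_isBigO : UniformlyBounded A f ↔
    (fun x : Σ i, A i => f x.1 x.2) =O[⊤] fun _ => (1 : ℝ) := by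
  simp only [UniformlyBounded, Asymptotics.isBigO_top, norm_one, mul_one, Sigma.forall,
    Subtype.forall]

theorem UniformlyBounded.union {B : ι → Set X} (hA : UniformlyBounded A f)
    (hB : UniformlyBounded B f) : UniformlyBounded (fun i => A i ∪ B i) f := by
  obtain ⟨C, hC⟩ := hA
  obtain ⟨C', hC'⟩ := hB
  exact ⟨max C C', fun i x hx => hx.elim (fun hx => (hC i x hx).trans (le_max_left _ _))
    fun hx => (hC' i x hx).trans (le_max_right _ _)⟩

end UniformBounds

section TangentialFamilies

variable {ι E : Type*} [NormedAddCommGroup E] [NormedSpace ℝ E] {L : E →L[ℝ] E}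
  {F q : ℝ × E → E} {Ω : ℝ × E → E →L[ℝ] E} {a b τ : ι → ℝ} {z u : ι → ℝ × ℝ → E} {l : Filter ι}
  {p : ι → ℝ × ℝ} {m : ℕ}

/-- The requirements on the coefficients of a tangential pair: `L` is a complex structure, and the
other coefficients are smooth and 1-periodic in time. -/
structure IsTangentialSystem (L : E →L[ℝ] E) (F q : ℝ × E → E) (Ω : ℝ × E → E →L[ℝ] E) : Prop where
  apply_apply : ∀ x, L (L x) = -x
  inhomogeneity : IsSmoothPeriodic F
  forcing : IsSmoothPeriodic q
  velocity : IsSmoothPeriodic Ω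

variable [ProperSpace E]

theorem isBigO_lap_iterate_pdt_snd (hS : IsTangentialSystem L F q Ω)
    (h : ∀ i, IsTangentialPair L F q Ω (Ico (a i) (b i)) (τ i) (z i) (u i))
    (hp : ∀ i, p i ∈ strip (Ico (a i) (b i)))
    (hz : ∀ j, 1 ≤ j → j ≤ m + 1 →
      (fun i => (pdt (strip (Ico (a i) (b i))))^[j] (z i) (p i)) =O[l] fun _ => (1 : ℝ))
    (hu : ∀ j < m + 1,
      (fun i => (pdt (strip (Ico (a i) (b i))))^[j] (u i) (p i)) =O[l] fun _ => (1 : ℝ)) :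
    (fun i => lap (strip (Ico (a i) (b i))) ((pdt (strip (Ico (a i) (b i))))^[m] (u i)) (p i)) =O[l]
      fun i => 1 + ‖(pdt (strip (Ico (a i) (b i))))^[m + 1] (u i) (p i)‖ := by
  have line_pdt {f : ι → ℝ × ℝ → E}
      (hf : ∀ i, ContDiffOn ℝ (⊤ : ℕ∞) (f i) (strip (Ico (a i) (b i)))) (j : ℕ) (i : ι) :=
    iterate_pdt_eq_iteratedDeriv (uniqueDiffOn_Ico _ _) (hf i) j (hp i)
  have hzs i := (h i).contDiffOn_fst
  have hus i := (h i).contDiffOn_snd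
  have hy i := contDiff_line (hzs i) (hp i).1
  have hball i : ‖z i ((p i).1, (p i).2)‖ ≤ 1 := (h i).norm_fst_le_one _ (hp i)
  have hG := isSmoothPeriodic_lapForcing (L := L) hS.inhomogeneity hS.forcing
  have hB := isSmoothPeriodic_lapCoeff (L := L) hS.forcing hS.velocity
  simp only [line_pdt hzs, line_pdt hus] at hz hu ⊢
  simp only [fun i => (h i).lap_iterate_pdt_snd_line hS.apply_apply (uniqueDiffOn_Ico _ _)
    (Ico_subset_closure_interior _ _) hS.inhomogeneity hS.forcing hS.velocity m (hp i)]
  exact ((isBigO_iteratedDeriv_comp_curve hG hy hball hz).trans (isBigO_one_add_norm _)).add <|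
    isBigO_iteratedDeriv_clm_apply_top (fun i => hB.contDiff_comp_curve (τ i) (hy i))
      (fun i => contDiff_line (hus i) (hp i).1) (fun i hi =>
        isBigO_iteratedDeriv_comp_curve hB hy hball fun j hj₁ hj₂ => hz j hj₁ (hj₂.trans hi)) hu

theorem isBigO_lap_iterate_pdt_succ_snd (hS : IsTangentialSystem L F q Ω)
    (h : ∀ i, IsTangentialPair L F q Ω (Ico (a i) (b i)) (τ i) (z i) (u i))
    (hp : ∀ i, p i ∈ strip (Ico (a i) (b i)))
    (hz : ∀ j, 1 ≤ j → j ≤ m + 1 →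
      (fun i => (pdt (strip (Ico (a i) (b i))))^[j] (z i) (p i)) =O[l] fun _ => (1 : ℝ))
    (hu : ∀ j < m + 1,
      (fun i => (pdt (strip (Ico (a i) (b i))))^[j] (u i) (p i)) =O[l] fun _ => (1 : ℝ)) :
    (fun i => lap (strip (Ico (a i) (b i))) ((pdt (strip (Ico (a i) (b i))))^[m + 1] (u i)) (p i))
      =O[l] fun i => 1 + ‖(pdt (strip (Ico (a i) (b i))))^[m + 1] (u i) (p i)‖ +
        ‖(pdt (strip (Ico (a i) (b i))))^[m + 2] (u i) (p i)‖ := by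
  have line_pdt {f : ι → ℝ × ℝ → E}
      (hf : ∀ i, ContDiffOn ℝ (⊤ : ℕ∞) (f i) (strip (Ico (a i) (b i)))) (j : ℕ) (i : ι) :=
    iterate_pdt_eq_iteratedDeriv (uniqueDiffOn_Ico _ _) (hf i) j (hp i)
  have hzs i := (h i).contDiffOn_fst
  have hus i := (h i).contDiffOn_snd
  have hy i := contDiff_line (hzs i) (hp i).1
  have hv i := contDiff_line (hus i) (hp i).1
  have hyu i := (h i).deriv_line (hp i).1
  have hball i : ‖z i ((p i).1, (p i).2)‖ ≤ 1 := (h i).norm_fst_le_one _ (hp i)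
  have hG := isSmoothPeriodic_lapForcing (L := L) hS.inhomogeneity hS.forcing
  have hB := isSmoothPeriodic_lapCoeff (L := L) hS.forcing hS.velocity
  simp only [line_pdt hzs, line_pdt hus] at hz hu ⊢
  simp only [fun i => (h i).lap_iterate_pdt_snd_line hS.apply_apply (uniqueDiffOn_Ico _ _)
    (Ico_subset_closure_interior _ _) hS.inhomogeneity hS.forcing hS.velocity (m + 1) (hp i)]
  have hGtop := isBigO_iteratedDeriv_succ_comp_curve hG hS.velocity hy hv hyu hball hz hu
  have hBtop := isBigO_iteratedDeriv_succ_comp_curve hB hS.velocity hy hv hyu hball hz hu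
  refine (hGtop.trans <| Asymptotics.isBigO_of_le l fun i => ?_).add <|
    isBigO_iteratedDeriv_succ_clm_apply_top (fun i => hB.contDiff_comp_curve (τ i) (hy i)) hv
      (Nat.le_add_left 1 m) (fun i hi => isBigO_iteratedDeriv_comp_curve hB hy hball
        fun j hj₁ hj₂ => hz j hj₁ (hj₂.trans hi)) hBtop hu
  rw [Real.norm_of_nonneg (by positivity), Real.norm_of_nonneg (by positivity)]
  exact le_add_of_nonneg_right (norm_nonneg _)

theorem isBigO_iterate_pdt_fst (hS : IsTangentialSystem L F q Ω)
    (h : ∀ i, IsTangentialPair L F q Ω (Ico (a i) (b i)) (τ i) (z i) (u i))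
    (hp : ∀ i, p i ∈ strip (Ico (a i) (b i)))
    (hz : ∀ j, 1 ≤ j → j ≤ m →
      (fun i => (pdt (strip (Ico (a i) (b i))))^[j] (z i) (p i)) =O[l] fun _ => (1 : ℝ))
    (hu : ∀ j ≤ m,
      (fun i => (pdt (strip (Ico (a i) (b i))))^[j] (u i) (p i)) =O[l] fun _ => (1 : ℝ)) :
    (fun i => (pdt (strip (Ico (a i) (b i))))^[m + 1] (z i) (p i)) =O[l] fun _ => (1 : ℝ) := by
  have line_pdt {f : ι → ℝ × ℝ → E}
      (hf : ∀ i, ContDiffOn ℝ (⊤ : ℕ∞) (f i) (strip (Ico (a i) (b i)))) (j : ℕ) (i : ι) :=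
    iterate_pdt_eq_iteratedDeriv (uniqueDiffOn_Ico _ _) (hf i) j (hp i)
  simp only [line_pdt fun i => (h i).contDiffOn_fst, line_pdt fun i => (h i).contDiffOn_snd]
    at hz hu ⊢
  exact isBigO_iteratedDeriv_of_deriv_eq hS.velocity
    (fun i => contDiff_line (h i).contDiffOn_fst (hp i).1)
    (fun i => contDiff_line (h i).contDiffOn_snd (hp i).1) (fun i => (h i).deriv_line (hp i).1)
    (fun i => (h i).norm_fst_le_one _ (hp i)) hz hu

end TangentialFamilies

section BernsteinFamilies

variable {ι E : Type*} [NormedAddCommGroup E] [InnerProductSpace ℝ E] [ProperSpace E]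
  {L : E →L[ℝ] E} {F q : ℝ × E → E} {Ω : ℝ × E → E →L[ℝ] E} {a b τ : ι → ℝ} {z u : ι → ℝ × ℝ → E}
  {p : ι → ℝ × ℝ} {m : ℕ}

theorem exists_lap_bounds (hS : IsTangentialSystem L F q Ω)
    (h : ∀ i, IsTangentialPair L F q Ω (Ico (a i) (b i)) (τ i) (z i) (u i))
    (hz : ∀ j, 1 ≤ j → j ≤ m + 1 → UniformlyBounded (fun i => strip (Ico (a i) (b i)))
      fun i => (pdt (strip (Ico (a i) (b i))))^[j] (z i))
    (hu : ∀ j < m + 1, UniformlyBounded (fun i => strip (Ico (a i) (b i)))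
      fun i => (pdt (strip (Ico (a i) (b i))))^[j] (u i)) :
    ∃ M, ∀ i, ∀ p ∈ strip (Ico (a i) (b i)),
      ‖(pdt (strip (Ico (a i) (b i))))^[m] (u i) p‖ ≤ M ∧
      ‖lap (strip (Ico (a i) (b i))) ((pdt (strip (Ico (a i) (b i))))^[m] (u i)) p‖ ≤
        M * (1 + ‖(pdt (strip (Ico (a i) (b i))))^[m + 1] (u i) p‖) ∧
      ‖lap (strip (Ico (a i) (b i))) ((pdt (strip (Ico (a i) (b i))))^[m + 1] (u i)) p‖ ≤
        M * (1 + ‖(pdt (strip (Ico (a i) (b i))))^[m + 1] (u i) p‖ +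
          ‖(pdt (strip (Ico (a i) (b i))))^[m + 2] (u i) p‖) := by
  let P := Σ i, strip (Ico (a i) (b i))
  have hP (x : P) : (x.2 : ℝ × ℝ) ∈ strip (Ico (a x.1) (b x.1)) := x.2.2
  have hzP j hj₁ hj₂ := uniformlyBounded_iff_isBigO.1 (hz j hj₁ hj₂)
  have huP j hj := uniformlyBounded_iff_isBigO.1 (hu j hj)
  obtain ⟨C₀, hC₀⟩ := hu m m.lt_succ_self
  obtain ⟨C₁, hC₁⟩ := Asymptotics.isBigO_top.1
    (isBigO_lap_iterate_pdt_snd hS (fun x : P => h x.1) hP hzP huP)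
  obtain ⟨C₂, hC₂⟩ := Asymptotics.isBigO_top.1
    (isBigO_lap_iterate_pdt_succ_snd hS (fun x : P => h x.1) hP hzP huP)
  refine ⟨max C₀ (max C₁ C₂), fun i p hp => ⟨(hC₀ i p hp).trans (le_max_left _ _),
    (hC₁ ⟨i, p, hp⟩).trans ?_, (hC₂ ⟨i, p, hp⟩).trans ?_⟩⟩
  all_goals
    rw [Real.norm_of_nonneg (by positivity)]
    gcongr
    simp

theorem isBigO_iterate_pdt_fst_of_disc (hS : IsTangentialSystem L F q Ω)
    (h : ∀ i, IsTangentialPair L F q Ω (Ico (a i) (b i)) (τ i) (z i) (u i))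
    (hz : ∀ j, 1 ≤ j → j ≤ m + 1 → UniformlyBounded (fun i => strip (Ico (a i) (b i)))
      fun i => (pdt (strip (Ico (a i) (b i))))^[j] (z i))
    (hu : ∀ j < m + 1, UniformlyBounded (fun i => strip (Ico (a i) (b i)))
      fun i => (pdt (strip (Ico (a i) (b i))))^[j] (u i))
    {R : ℝ} (hR₀ : 0 < R) (hR₁ : R ≤ 1) {c : ι → ℝ × ℝ} (hb : ∀ i, (c i).1 + R < b i)
    (hbdry : ∀ i, a i < (c i).1 - R ∨ a i = (c i).1 ∧ ∀ j t,
      ⟪(pdt (strip (Ico (a i) (b i))))^[j] (u i) (a i, t),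
        pds (strip (Ico (a i) (b i))) ((pdt (strip (Ico (a i) (b i))))^[j] (u i)) (a i, t)⟫_ℝ = 0)
    (hp : ∀ i, p i ∈ strip (Ico (a i) (b i)))
    (hpc : ∀ i, ((p i).1 - (c i).1) ^ 2 + ((p i).2 - (c i).2) ^ 2 ≤ R ^ 2 / 4) :
    (fun i => (pdt (strip (Ico (a i) (b i))))^[m + 2] (z i) (p i)) =O[⊤] fun _ => (1 : ℝ) := by
  obtain ⟨M, hM⟩ := exists_lap_bounds hS h hz hu
  have hv : (fun i => (pdt (strip (Ico (a i) (b i))))^[m + 1] (u i) (p i)) =O[⊤]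
      fun _ => (1 : ℝ) := by
    let B := (M ^ 2 + bernsteinWeight M * (3 * M ^ 2 + M ^ 4)) / (3 / 4 * R ^ 2) ^ 2
    refine Asymptotics.IsBigO.of_bound √B (.of_forall fun i => ?_)
    rw [norm_one, mul_one]
    refine Real.le_sqrt_of_sq_le ((le_div_iff₀' (by positivity)).2 ?_)
    simp only [Function.iterate_succ_apply'] at hM ⊢
    exact bernstein_estimate hR₀ hR₁ (hb i) (contDiffOn_iterate_pdt
      (uniqueDiffOn_strip (uniqueDiffOn_Ico _ _)) (h i).contDiffOn_snd m)
      ((hbdry i).imp_right fun ⟨hac, hij⟩ => ⟨hac, fun t => ⟨hij m t, by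
        simpa only [Function.iterate_succ_apply'] using hij (m + 1) t⟩⟩)
      (fun p hp => (hM i p hp).1) (fun p hp => (hM i p hp).2.1) (fun p hp => (hM i p hp).2.2)
      (hp i) (hpc i)
  refine isBigO_iterate_pdt_fst hS h hp (fun j hj₁ hj₂ => (hz j hj₁ hj₂).isBigO hp)
    fun j hj => ?_
  rcases hj.lt_or_eq with hj | rfl
  · exact (hu j hj).isBigO hp
  · exact hv

end BernsteinFamilies

section FloerCoefficients

variable {H : ℝ → ℂ → ℝ}

/-- The inhomogeneity `i · X_H` in the Floer equation `∂_s z = -i ∂_t z + i X_H(t + τ₀, z)`. -/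
noncomputable def floerForcing (H : ℝ → ℂ → ℝ) (x : ℝ × ℂ) : ℂ := I * XH H x.1 x.2

theorem IsAdmissible.isSmoothPeriodic (hH : IsAdmissible H) :
    IsSmoothPeriodic fun p : ℝ × ℂ => H p.1 p.2 where
  contDiff := hH.smooth
  periodic := hH.periodic

theorem IsAdmissible.hasFDerivAt (hH : IsAdmissible H) (t : ℝ) (w : ℂ) :
    HasFDerivAt (H t) (fderiv ℝ (fun p : ℝ × ℂ => H p.1 p.2) (t, w) ∘L .inr ℝ ℝ ℂ) w :=
  (hH.smooth.differentiable (by simp) (t, w)).hasFDerivAt.comp w (hasFDerivAt_prodMk_right t w)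

theorem isSmoothPeriodic_floerForcing (hH : IsAdmissible H) :
    IsSmoothPeriodic (floerForcing H) := by
  have hdH := hH.isSmoothPeriodic.fderiv
  have heq : floerForcing H = fun x => I * (I *
      ((fderiv ℝ (fun p : ℝ × ℂ => H p.1 p.2) x (0, 1) : ℝ) +
        (fderiv ℝ (fun p : ℝ × ℂ => H p.1 p.2) x (0, I) : ℝ) * I)) := by
    funext x
    simp [floerForcing, XH, (hH.hasFDerivAt x.1 x.2).fderiv]
  have hpartial (v : ℝ × ℂ) : ContDiff ℝ (⊤ : ℕ∞) fun x : ℝ × ℂ =>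
      ((fderiv ℝ (fun p : ℝ × ℂ => H p.1 p.2) x v : ℝ) : ℂ) :=
    ofRealCLM.contDiff.comp (hdH.contDiff.clm_apply contDiff_const)
  rw [heq]
  exact ⟨contDiff_const.mul (contDiff_const.mul ((hpartial _).add ((hpartial _).mul
    contDiff_const))), fun t w => by simp only [hdH.periodic]⟩

/-- A smooth function on `ℂ` which agrees with `w⁻¹` for `1/2 ≤ ‖w‖`. -/
noncomputable def cutoffInv (w : ℂ) : ℂ := Real.smoothTransition (8 * ‖w‖ ^ 2 - 1) * w⁻¹

theorem cutoffInv_eq_inv {w : ℂ} (hw : 1 / 2 ≤ ‖w‖) : cutoffInv w = w⁻¹ := by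
  rw [cutoffInv, Real.smoothTransition.one_of_one_le (by nlinarith), Complex.ofReal_one, one_mul]

theorem contDiff_cutoffInv : ContDiff ℝ (⊤ : ℕ∞) cutoffInv := by
  rw [contDiff_iff_contDiffAt]
  intro w
  rcases eq_or_ne w 0 with rfl | hw
  · have hzero : cutoffInv =ᶠ[𝓝 0] fun _ => 0 := by
      filter_upwards [Metric.ball_mem_nhds (0 : ℂ) (show (0 : ℝ) < 1 / 4 by norm_num)] with y hy
      have hy' : ‖y‖ < 1 / 4 := by simpa using hy
      rw [cutoffInv, Real.smoothTransition.zero_of_nonpos (by nlinarith [norm_nonneg y]),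
        Complex.ofReal_zero, zero_mul]
    exact contDiffAt_const.congr_of_eventuallyEq hzero
  · exact (ofRealCLM.contDiff.comp (Real.smoothTransition.contDiff.comp
      ((contDiff_const.mul (contDiff_norm_sq ℝ)).sub contDiff_const))).contDiffAt.mul
      (contDiffAt_inv ℝ hw)

/-- The inhomogeneity `i · X_H(t, z) / z` in the equation for `log z`, cut off near `z = 0`. -/
noncomputable def logForcing (H : ℝ → ℂ → ℝ) (x : ℝ × ℂ) : ℂ := cutoffInv x.2 * floerForcing H x

theorem isSmoothPeriodic_logForcing (hH : IsAdmissible H) : IsSmoothPeriodic (logForcing H) where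
  contDiff := (contDiff_cutoffInv.comp contDiff_snd).mul (isSmoothPeriodic_floerForcing hH).contDiff
  periodic t w := by simp only [logForcing, (isSmoothPeriodic_floerForcing hH).periodic]

theorem IsAdmissible.fderiv_I_mul_eq_zero (hH : IsAdmissible H) (t : ℝ) {w : ℂ} (hw : ‖w‖ = 1) :
    fderiv ℝ (H t) w (I * w) = 0 := by
  have hrot : HasDerivAt (fun θ : ℝ => exp (θ * I) * w) (I * w) 0 := by
    simpa using ((ofRealCLM.hasDerivAt (x := 0)).mul_const I).cexp.mul_const w
  have hH' : HasFDerivAt (H t) (fderiv ℝ (H t) w) (exp ((0 : ℝ) * I) * w) := by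
    simpa using (hH.hasFDerivAt t w).differentiableAt.hasFDerivAt
  have hconst : (H t ∘ fun θ : ℝ => exp (θ * I) * w) = fun _ => H t w :=
    funext fun θ => hH.bdry_const t _ _ (by rw [norm_mul, norm_exp_ofReal_mul_I, hw, one_mul]) hw
  have hderiv := hH'.comp_hasDerivAt (0 : ℝ) hrot
  rw [hconst] at hderiv
  exact hderiv.unique (hasDerivAt_const _ _)

theorem logForcing_im_eq_zero (hH : IsAdmissible H) (t : ℝ) {w : ℂ} (hw : ‖w‖ = 1) :
    (logForcing H (t, w)).im = 0 := by
  have htangent := hH.fderiv_I_mul_eq_zero t hw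
  have hIw : I * w = (-w.im) • (1 : ℂ) + w.re • I := by apply Complex.ext <;> simp
  have hinv : cutoffInv w = (starRingEnd ℂ) w := by
    rw [cutoffInv_eq_inv (by rw [hw]; norm_num), inv_def, normSq_eq_norm_sq, hw]; simp
  rw [hIw, map_add, map_smul, map_smul, smul_eq_mul, smul_eq_mul] at htangent
  simp only [logForcing, floerForcing, XH, hinv, mul_im, mul_re, I_re, I_im, add_re, add_im,
    ofReal_re, ofReal_im, conj_re, conj_im]
  linarith

/-- Multiplication by `-i`, the coefficient of `∂_t z` in the Floer equation. -/
noncomputable def negI : ℂ →L[ℝ] ℂ := ContinuousLinearMap.mul ℝ ℂ (-I)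

theorem negI_apply (w : ℂ) : negI w = -I * w := rfl

theorem negI_negI (w : ℂ) : negI (negI w) = -w := by
  rw [negI_apply, negI_apply, ← mul_assoc, neg_mul_neg, I_mul_I, neg_one_mul]

theorem isTangentialSystem_floer (hH : IsAdmissible H) :
    IsTangentialSystem negI (floerForcing H) (floerForcing H) fun _ => .id ℝ ℂ where
  apply_apply := negI_negI
  inhomogeneity := isSmoothPeriodic_floerForcing hH
  forcing := isSmoothPeriodic_floerForcing hH
  velocity := ⟨contDiff_const, fun _ _ => rfl⟩

theorem isTangentialSystem_log (hH : IsAdmissible H) :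
    IsTangentialSystem negI (floerForcing H) (logForcing H)
      fun x => ContinuousLinearMap.mul ℝ ℂ x.2 where
  apply_apply := negI_negI
  inhomogeneity := isSmoothPeriodic_floerForcing hH
  forcing := isSmoothPeriodic_logForcing hH
  velocity := ⟨(ContinuousLinearMap.mul ℝ ℂ).contDiff.comp contDiff_snd, fun _ _ => rfl⟩

end FloerCoefficients

section VelocityPair

variable {E : Type*} [NormedAddCommGroup E] [NormedSpace ℝ E] {L : E →L[ℝ] E} {F : ℝ × E → E}
  {J : Set ℝ} {τ : ℝ} {z : ℝ × ℝ → E}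

theorem isTangentialPair_pdt (hJ : UniqueDiffOn ℝ J) (hJ' : J ⊆ closure (interior J))
    (hF : IsSmoothPeriodic F) (hz : ContDiffOn ℝ (⊤ : ℕ∞) z (strip J))
    (hball : ∀ p ∈ strip J, ‖z p‖ ≤ 1)
    (h : EqOn (pds (strip J) z) (fun p => L (pdt (strip J) z p) + F (p.2 + τ, z p)) (strip J)) :
    IsTangentialPair L F F (fun _ => .id ℝ E) J τ z (pdt (strip J) z) where
  contDiffOn_fst := hz
  contDiffOn_snd := contDiffOn_pdt (uniqueDiffOn_strip hJ) hz
  norm_fst_le_one := hball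
  pds_fst := h
  pds_snd := pds_iterate_pdt_of_eq (uniqueDiffOn_strip hJ) (strip_subset_closure_interior hJ') hz
    (contDiffOn_comp_graph hF τ hz) h 1
  pdt_fst _ _ := rfl

end VelocityPair

section LogarithmicPair

variable {A : Set (ℝ × ℝ)} {z u v : ℝ × ℝ → ℂ}

theorem pds_mul (hA : UniqueDiffOn ℝ A) (hz : DifferentiableOn ℝ z A)
    (hu : DifferentiableOn ℝ u A) :
    EqOn (pds A fun p => z p * u p) (fun p => z p * pds A u p + pds A z p * u p) A :=
  fun p hp => by simp [pds, fderivWithin_fun_mul (hA p hp) (hz p hp) (hu p hp), mul_comm]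

theorem pdt_mul (hA : UniqueDiffOn ℝ A) (hz : DifferentiableOn ℝ z A)
    (hu : DifferentiableOn ℝ u A) :
    EqOn (pdt A fun p => z p * u p) (fun p => z p * pdt A u p + pdt A z p * u p) A :=
  fun p hp => by simp [pdt, fderivWithin_fun_mul (hA p hp) (hz p hp) (hu p hp), mul_comm]

theorem pds_eq_pdt_of_mul_eq (hA : UniqueDiffOn ℝ A) (hA' : A ⊆ closure (interior A))
    (hz : ContDiffOn ℝ (⊤ : ℕ∞) z A) (hu : DifferentiableOn ℝ u A) (hv : DifferentiableOn ℝ v A)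
    (hne : ∀ p ∈ A, z p ≠ 0) (hzu : EqOn (pdt A z) (fun p => z p * u p) A)
    (hzv : EqOn (pds A z) (fun p => z p * v p) A) : EqOn (pds A u) (pdt A v) A := by
  intro p hp
  have hzd := hz.differentiableOn (by simp)
  have hcomm : z p * pds A u p + pds A z p * u p = z p * pdt A v p + pdt A z p * v p :=
    calc _ = pds A (pdt A z) p := ((pds_congr hzu).trans (pds_mul hA hzd hu) hp).symm
      _ = pdt A (pds A z) p := pds_pdt_comm hA hA' hz hp
      _ = _ := (pdt_congr hzv).trans (pdt_mul hA hzd hv) hp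
  refine mul_left_cancel₀ (hne p hp) ?_
  rw [hzu hp, hzv hp] at hcomm
  linear_combination hcomm

variable {H : ℝ → ℂ → ℝ} {J : Set ℝ} {τ : ℝ}

/-- The logarithmic derivative `∂_t z / z` on the strip `J × ℝ`, cut off near `z = 0`. -/
noncomputable def logVelocity (J : Set ℝ) (z : ℝ × ℝ → ℂ) (p : ℝ × ℝ) : ℂ :=
  cutoffInv (z p) * pdt (strip J) z p

theorem contDiffOn_logVelocity (hJ : UniqueDiffOn ℝ J) (hz : ContDiffOn ℝ (⊤ : ℕ∞) z (strip J)) :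
    ContDiffOn ℝ (⊤ : ℕ∞) (logVelocity J z) (strip J) :=
  (contDiff_cutoffInv.comp_contDiffOn hz).mul (contDiffOn_pdt (uniqueDiffOn_strip hJ) hz)

theorem mul_cutoffInv_mul {w : ℂ} (hw : 1 / 2 ≤ ‖w‖) (x : ℂ) : w * (cutoffInv w * x) = x := by
  rw [cutoffInv_eq_inv hw, mul_inv_cancel_left₀ (norm_pos_iff.1 (by linarith))]

theorem isTangentialPair_logVelocity (hH : IsAdmissible H) (hJ : UniqueDiffOn ℝ J)
    (hJ' : J ⊆ closure (interior J)) (hz : ContDiffOn ℝ (⊤ : ℕ∞) z (strip J))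
    (hball : ∀ p ∈ strip J, ‖z p‖ ≤ 1) (hlow : ∀ p ∈ strip J, 1 / 2 ≤ ‖z p‖)
    (h : EqOn (pds (strip J) z)
      (fun p => negI (pdt (strip J) z p) + floerForcing H (p.2 + τ, z p)) (strip J)) :
    IsTangentialPair negI (floerForcing H) (logForcing H)
      (fun x => ContinuousLinearMap.mul ℝ ℂ x.2) J τ z (logVelocity J z) := by
  have hA := uniqueDiffOn_strip hJ
  have hu := contDiffOn_logVelocity hJ hz
  have hud := hu.differentiableOn (by simp)
  have hG := contDiffOn_comp_graph (isSmoothPeriodic_logForcing hH) τ hz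
  have hGd := hG.differentiableOn (by simp)
  have hzu : EqOn (pdt (strip J) z) (fun p => z p * logVelocity J z p) (strip J) :=
    fun p hp => (mul_cutoffInv_mul (hlow p hp) _).symm
  have hzv : EqOn (pds (strip J) z)
      (fun p => z p * (negI (logVelocity J z p) + logForcing H (p.2 + τ, z p))) (strip J) := by
    intro p hp
    simp only [h hp, negI_apply, logForcing, mul_add, mul_cutoffInv_mul (hlow p hp),
      mul_left_comm (z p), ← hzu hp]
  refine ⟨hz, hu, hball, h, ?_, hzu⟩
  exact (pds_eq_pdt_of_mul_eq hA (strip_subset_closure_interior hJ') hz hud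
    ((negI.differentiable.comp_differentiableOn hud).add hGd)
    (fun p hp => norm_pos_iff.1 (by linarith [hlow p hp])) hzu hzv).trans
    (pdt_clm_apply_add hA negI hud hGd)

theorem logVelocity_re_eq_zero (hz : DifferentiableOn ℝ z (strip J)) {s : ℝ} (hs : s ∈ J)
    (h : ∀ t, ‖z (s, t)‖ = 1) (t : ℝ) : (logVelocity J z (s, t)).re = 0 := by
  have hnorm := (hasDerivAt_line_pdt hz hs t).norm_sq
  simp only [h] at hnorm
  have horth : ⟪z (s, t), pdt (strip J) z (s, t)⟫_ℝ = 0 := by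
    linarith [hnorm.unique (hasDerivAt_const t _)]
  rw [Complex.inner] at horth
  rw [logVelocity, cutoffInv_eq_inv (by rw [h]; norm_num), inv_def, normSq_eq_norm_sq, h]
  simpa [mul_comm] using horth

theorem IsTangentialPair.inner_iterate_pdt_pds_eq_zero {F q : ℝ × ℂ → ℂ} {Ω : ℝ × ℂ → ℂ →L[ℝ] ℂ}
    (h : IsTangentialPair negI F q Ω J τ z u) (hJ : UniqueDiffOn ℝ J)
    (hJ' : J ⊆ closure (interior J)) (hq : IsSmoothPeriodic q) {s : ℝ} (hs : s ∈ J)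
    (hre : ∀ t, (u (s, t)).re = 0) (him : ∀ t, (q (t + τ, z (s, t))).im = 0) (k : ℕ) (t : ℝ) :
    ⟪(pdt (strip J))^[k] u (s, t), pds (strip J) ((pdt (strip J))^[k] u) (s, t)⟫_ℝ = 0 := by
  have hQ := contDiffOn_comp_graph hq τ h.contDiffOn_fst
  have hre' k := clm_iterate_pdt_eq_zero hJ reCLM h.contDiffOn_snd hs hre k t
  have him' := clm_iterate_pdt_eq_zero hJ imCLM hQ hs him (k + 1) t
  have hpds := pds_iterate_pdt_of_eq (uniqueDiffOn_strip hJ) (strip_subset_closure_interior hJ')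
    h.contDiffOn_snd (contDiffOn_pdt (uniqueDiffOn_strip hJ) hQ) h.pds_snd k
    (mk_mem_prod hs (mem_univ t))
  simp only [reCLM_apply, imCLM_apply] at hre' him'
  rw [Function.iterate_succ_apply] at him'
  rw [hpds, Complex.inner]
  simp [negI_apply, hre' k, hre' (k + 1), him', -Function.iterate_succ]

end LogarithmicPair

section FloerSolutions

/-- Solutions `z` of the Floer equation on `[S, ∞) × ℝ` with values in the unit disk, which map the
boundary line to the unit circle and satisfy `|∂_t z| ≤ c₀`. -/
structure IsFloerSolution (H : ℝ → ℂ → ℝ) (c₀ S τ₀ : ℝ) (z : ℝ × ℝ → ℂ) : Prop where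
  contDiffOn : ContDiffOn ℝ (⊤ : ℕ∞) z (strip (Ici S))
  norm_le_one : ∀ p ∈ strip (Ici S), ‖z p‖ ≤ 1
  floer_eq : ∀ p ∈ strip (Ici S), pds (strip (Ici S)) z p +
    I * (pdt (strip (Ici S)) z p - XH H (p.2 + τ₀) (z p)) = 0
  norm_boundary : ∀ t, ‖z (S, t)‖ = 1
  norm_pdt_le : ∀ p ∈ strip (Ici S), ‖pdt (strip (Ici S)) z p‖ ≤ c₀

variable {H : ℝ → ℂ → ℝ} {c₀ S b τ₀ : ℝ} {z : ℝ × ℝ → ℂ}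

theorem strip_Ico_subset : strip (Ico S b) ⊆ strip (Ici S) :=
  prod_mono Ico_subset_Ici_self Subset.rfl

theorem fderivWithin_strip_Ico (f : ℝ × ℝ → ℂ) {p : ℝ × ℝ} (hp : p ∈ strip (Ico S b)) :
    fderivWithin ℝ f (strip (Ico S b)) p = fderivWithin ℝ f (strip (Ici S)) p := by
  have hinter : strip (Ico S b) = strip (Ici S) ∩ strip (Iio b) := by
    rw [prod_inter_prod, Ici_inter_Iio, inter_univ]
  rw [hinter]
  exact fderivWithin_inter (prod_mem_nhds (Iio_mem_nhds hp.1.2) univ_mem)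

theorem iterate_pdt_eqOn_strip_Ico {f : ℝ × ℝ → ℂ} (hf : ContDiffOn ℝ (⊤ : ℕ∞) f (strip (Ici S)))
    (k : ℕ) : EqOn ((pdt (strip (Ico S b)))^[k] f) ((pdt (strip (Ici S)))^[k] f)
      (strip (Ico S b)) := fun p hp => by
  rw [iterate_pdt_eq_iteratedDeriv (uniqueDiffOn_Ico S b) (hf.mono strip_Ico_subset) k hp,
    iterate_pdt_eq_iteratedDeriv (uniqueDiffOn_Ici S) hf k (strip_Ico_subset hp)]

namespace IsFloerSolution

theorem pds_eqOn (h : IsFloerSolution H c₀ S τ₀ z) : EqOn (pds (strip (Ici S)) z)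
    (fun p => negI (pdt (strip (Ici S)) z p) + floerForcing H (p.2 + τ₀, z p))
    (strip (Ici S)) := fun p hp => by
  simp only [negI_apply, floerForcing]
  linear_combination h.floer_eq p hp

theorem pds_eqOn_Ico (h : IsFloerSolution H c₀ S τ₀ z) : EqOn (pds (strip (Ico S b)) z)
    (fun p => negI (pdt (strip (Ico S b)) z p) + floerForcing H (p.2 + τ₀, z p))
    (strip (Ico S b)) := fun p hp => by
  have heq := h.pds_eqOn (strip_Ico_subset hp)
  simp only [pds, pdt] at heq ⊢
  rwa [fderivWithin_strip_Ico z hp]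

theorem exists_norm_pds_le (hH : IsAdmissible H) (c₀ : ℝ) : ∃ K, ∀ S τ₀ z,
    IsFloerSolution H c₀ S τ₀ z → ∀ p ∈ strip (Ici S), ‖pds (strip (Ici S)) z p‖ ≤ K := by
  obtain ⟨C, hC⟩ := (isSmoothPeriodic_floerForcing hH).exists_norm_iteratedFDeriv_le 0
  refine ⟨c₀ + C, fun S τ₀ z h p hp => ?_⟩
  rw [h.pds_eqOn hp]
  refine (norm_add_le _ _).trans (add_le_add ?_ ?_)
  · simpa [negI_apply] using h.norm_pdt_le p hp
  · simpa using hC (p.2 + τ₀) (z p) (h.norm_le_one p hp)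

theorem exists_half_le_norm (hH : IsAdmissible H) (c₀ : ℝ) : ∃ δ, 0 < δ ∧ δ ≤ 1 ∧ ∀ S τ₀ z,
    IsFloerSolution H c₀ S τ₀ z → ∀ p ∈ strip (Ico S (S + δ)), 1 / 2 ≤ ‖z p‖ := by
  obtain ⟨K, hK⟩ := exists_norm_pds_le hH c₀
  have hpos : 0 < 2 * (|K| + 1) := by positivity
  refine ⟨1 / (2 * (|K| + 1)), by positivity, ?_, fun S τ₀ z h p hp => ?_⟩
  · rw [div_le_one hpos]
    linarith [abs_nonneg K]
  obtain ⟨s, t⟩ := p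
  obtain ⟨hs₀, hs₁⟩ : S ≤ s ∧ s < S + 1 / (2 * (|K| + 1)) := hp.1
  have hmean : ‖z (s, t) - z (S, t)‖ ≤ (|K| + 1) * ‖s - S‖ :=
    (convex_Ici S).norm_image_sub_le_of_norm_hasDerivWithin_le
      (fun x hx => hasDerivWithinAt_line_pds (h.contDiffOn.differentiableOn (by simp)) hx t)
      (fun x hx => (hK S τ₀ z h _ (mk_mem_prod hx (mem_univ t))).trans
        ((le_abs_self K).trans (by linarith))) self_mem_Ici hs₀
  have hsmall : (|K| + 1) * ‖s - S‖ ≤ 1 / 2 :=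
    calc (|K| + 1) * ‖s - S‖ ≤ (|K| + 1) * (1 / (2 * (|K| + 1))) := by
          rw [Real.norm_of_nonneg (by linarith)]
          gcongr
          linarith
      _ = 1 / 2 := by field_simp
  have htri := norm_sub_norm_le (z (S, t)) (z (s, t))
  rw [h.norm_boundary, norm_sub_rev] at htri
  linarith

end IsFloerSolution

end FloerSolutions

section FloerFamilies

variable {ι : Type*} {H : ℝ → ℂ → ℝ} {c₀ : ℝ} {S τ : ι → ℝ} {z : ι → ℝ × ℝ → ℂ} {m : ℕ}

theorem UniformlyBounded.iterate_pdt_strip_Ico {κ : Type*} {k : ℕ}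
    (hb : UniformlyBounded (fun i => strip (Ici (S i)))
      fun i => (pdt (strip (Ici (S i))))^[k] (z i))
    (h : ∀ i, IsFloerSolution H c₀ (S i) (τ i) (z i)) (φ : κ → ι) (b : κ → ℝ) :
    UniformlyBounded (fun a => strip (Ico (S (φ a)) (b a)))
      fun a => (pdt (strip (Ico (S (φ a)) (b a))))^[k] (z (φ a)) := by
  obtain ⟨C, hC⟩ := hb
  refine ⟨C, fun a p hp => ?_⟩
  simp only [iterate_pdt_eqOn_strip_Ico (h (φ a)).contDiffOn k hp]
  exact hC (φ a) p (strip_Ico_subset hp)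

theorem uniformlyBounded_iterate_pdt_interior (hH : IsAdmissible H)
    (h : ∀ i, IsFloerSolution H c₀ (S i) (τ i) (z i))
    (hz : ∀ j, 1 ≤ j → j ≤ m + 1 → UniformlyBounded (fun i => strip (Ici (S i)))
      fun i => (pdt (strip (Ici (S i))))^[j] (z i)) {ρ : ℝ} (hρ₀ : 0 < ρ) (hρ₁ : ρ ≤ 1) :
    UniformlyBounded (fun i => strip (Ici (S i + ρ)))
      fun i => (pdt (strip (Ici (S i))))^[m + 2] (z i) := by
  rw [uniformlyBounded_iff_isBigO]
  let b (x : Σ i, strip (Ici (S i + ρ))) := (x.2 : ℝ × ℝ).1 + 1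
  have hzb j hj₁ hj₂ := (hz j hj₁ hj₂).iterate_pdt_strip_Ico h Sigma.fst b
  have hp (x : Σ i, strip (Ici (S i + ρ))) : (x.2 : ℝ × ℝ) ∈ strip (Ico (S x.1) (b x)) :=
    have hx : S x.1 + ρ ≤ (x.2 : ℝ × ℝ).1 := x.2.2.1
    ⟨⟨by linarith, by simp [b]⟩, mem_univ _⟩
  refine (isBigO_iterate_pdt_fst_of_disc (isTangentialSystem_floer hH)
    (fun x => isTangentialPair_pdt (uniqueDiffOn_Ico _ _) (Ico_subset_closure_interior _ _)
      (isSmoothPeriodic_floerForcing hH) ((h x.1).contDiffOn.mono strip_Ico_subset)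
      (fun p hp => (h x.1).norm_le_one p (strip_Ico_subset hp)) (h x.1).pds_eqOn_Ico)
    hzb (fun j hj => hzb (j + 1) (by omega) (by omega)) (half_pos hρ₀) (by linarith)
    (c := fun x => x.2) (fun x => by simp only [b]; linarith) (fun x => .inl ?_) hp
    (fun x => by simp only [sub_self, ne_eq, OfNat.ofNat_ne_zero, not_false_eq_true, zero_pow,
      add_zero]; positivity)).congr_left fun x =>
      iterate_pdt_eqOn_strip_Ico (h x.1).contDiffOn (m + 2) (hp x)
  have hx : S x.1 + ρ ≤ (x.2 : ℝ × ℝ).1 := x.2.2.1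
  linarith

theorem uniformlyBounded_iterate_pdt_logVelocity {J : ι → Set ℝ}
    (hJ : ∀ i, UniqueDiffOn ℝ (J i)) (hzs : ∀ i, ContDiffOn ℝ (⊤ : ℕ∞) (z i) (strip (J i)))
    (hball : ∀ i, ∀ p ∈ strip (J i), ‖z i p‖ ≤ 1)
    (hz : ∀ j, 1 ≤ j → j ≤ m + 1 → UniformlyBounded (fun i => strip (J i))
      fun i => (pdt (strip (J i)))^[j] (z i)) :
    UniformlyBounded (fun i => strip (J i))
      fun i => (pdt (strip (J i)))^[m] (logVelocity (J i) (z i)) := by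
  let P := Σ i, strip (J i)
  have hP (x : P) : (x.2 : ℝ × ℝ) ∈ strip (J x.1) := x.2.2
  have hcoeff : IsSmoothPeriodic fun x : ℝ × ℂ => ContinuousLinearMap.mul ℝ ℂ (cutoffInv x.2) :=
    ⟨(ContinuousLinearMap.mul ℝ ℂ).contDiff.comp (contDiff_cutoffInv.comp contDiff_snd),
      fun _ _ => rfl⟩
  have hline (x : P) := contDiff_line (hzs x.1) (hP x).1
  have hzt i := contDiffOn_pdt (uniqueDiffOn_strip (hJ i)) (hzs i)
  have hzP j (hj₁ : 1 ≤ j) (hj₂ : j ≤ m + 1) := uniformlyBounded_iff_isBigO.1 (hz j hj₁ hj₂)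
  have hzk : ∀ j, 1 ≤ j → j ≤ m + 1 → (fun x : P => iteratedDeriv j
      (fun t => z x.1 ((x.2 : ℝ × ℝ).1, t)) (x.2 : ℝ × ℝ).2) =O[⊤] fun _ => (1 : ℝ) := by
    simpa only [fun j (x : P) => iterate_pdt_eq_iteratedDeriv (hJ x.1) (hzs x.1) j (hP x)] using hzP
  have hztk : ∀ j ≤ m, (fun x : P => iteratedDeriv j
      (fun t => pdt (strip (J x.1)) (z x.1) ((x.2 : ℝ × ℝ).1, t)) (x.2 : ℝ × ℝ).2) =O[⊤]
        fun _ => (1 : ℝ) := fun j hj => by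
    simpa only [Function.iterate_succ_apply, fun x : P =>
      iterate_pdt_eq_iteratedDeriv (hJ x.1) (hzt x.1) j (hP x)] using
      hzP (j + 1) (by omega) (by omega)
  rw [uniformlyBounded_iff_isBigO]
  simp only [fun x : P => iterate_pdt_eq_iteratedDeriv (hJ x.1)
    (contDiffOn_logVelocity (hJ x.1) (hzs x.1)) m (hP x)]
  exact (isBigO_iteratedDeriv_clm_apply_top
    (fun x : P => hcoeff.contDiff_comp_curve 0 (hline x))
    (fun x => contDiff_line (hzt x.1) (hP x).1)
    (fun i hi => isBigO_iteratedDeriv_comp_curve hcoeff hline (fun x => hball x.1 _ (hP x))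
      fun j hj₁ hj₂ => hzk j hj₁ (by omega)) fun j hj => hztk j hj.le).trans
    ((Asymptotics.isBigO_refl _ _).add (hztk m le_rfl).norm_left)

theorem uniformlyBounded_iterate_pdt_collar (hH : IsAdmissible H)
    (h : ∀ i, IsFloerSolution H c₀ (S i) (τ i) (z i)) {δ : ℝ} (hδ₀ : 0 < δ) (hδ₁ : δ ≤ 1)
    (hlow : ∀ i, ∀ p ∈ strip (Ico (S i) (S i + δ)), 1 / 2 ≤ ‖z i p‖)
    (hz : ∀ j, 1 ≤ j → j ≤ m + 1 → UniformlyBounded (fun i => strip (Ici (S i)))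
      fun i => (pdt (strip (Ici (S i))))^[j] (z i)) :
    UniformlyBounded (fun i => strip (Ico (S i) (S i + δ / 4)))
      fun i => (pdt (strip (Ici (S i))))^[m + 2] (z i) := by
  rw [uniformlyBounded_iff_isBigO]
  let P := Σ i, strip (Ico (S i) (S i + δ / 4))
  have hzb j hj₁ hj₂ := (hz j hj₁ hj₂).iterate_pdt_strip_Ico h (Sigma.fst : P → ι)
    fun x => S x.1 + δ
  have hzs (x : P) := (h x.1).contDiffOn.mono (strip_Ico_subset (b := S x.1 + δ))
  have hball (x : P) p (hp : p ∈ strip (Ico (S x.1) (S x.1 + δ))) :=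
    (h x.1).norm_le_one p (strip_Ico_subset hp)
  have hJ (x : P) := uniqueDiffOn_Ico (S x.1) (S x.1 + δ)
  have hp (x : P) : (x.2 : ℝ × ℝ) ∈ strip (Ico (S x.1) (S x.1 + δ)) :=
    ⟨⟨x.2.2.1.1, x.2.2.1.2.trans (by linarith)⟩, mem_univ _⟩
  have hS (x : P) : S x.1 ∈ Ico (S x.1) (S x.1 + δ) := ⟨le_rfl, by linarith⟩
  have hpair (x : P) := isTangentialPair_logVelocity hH (hJ x) (Ico_subset_closure_interior _ _)
    (hzs x) (hball x) (hlow x.1) (h x.1).pds_eqOn_Ico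
  refine (isBigO_iterate_pdt_fst_of_disc (isTangentialSystem_log hH) hpair hzb
    (fun j hj => uniformlyBounded_iterate_pdt_logVelocity hJ hzs hball
      fun i hi₁ hi₂ => hzb i hi₁ (by omega)) (half_pos hδ₀) (by linarith)
    (c := fun x => (S x.1, (x.2 : ℝ × ℝ).2)) (fun x => by linarith)
    (fun x => .inr ⟨rfl, fun j t => (hpair x).inner_iterate_pdt_pds_eq_zero (hJ x)
      (Ico_subset_closure_interior _ _) (isSmoothPeriodic_logForcing hH) (hS x)
      (logVelocity_re_eq_zero ((hzs x).differentiableOn (by simp)) (hS x) (h x.1).norm_boundary)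
      (fun t => logForcing_im_eq_zero hH _ ((h x.1).norm_boundary t)) j t⟩)
    hp fun x => ?_).congr_left fun x =>
      iterate_pdt_eqOn_strip_Ico (h x.1).contDiffOn (m + 2) (hp x)
  have hx := x.2.2.1
  simp only [sub_self]
  nlinarith [hx.1, hx.2]

theorem uniformlyBounded_iterate_pdt (hH : IsAdmissible H)
    (h : ∀ i, IsFloerSolution H c₀ (S i) (τ i) (z i)) (k : ℕ) :
    UniformlyBounded (fun i => strip (Ici (S i)))
      fun i => (pdt (strip (Ici (S i))))^[k] (z i) := by
  obtain ⟨δ, hδ₀, hδ₁, hδ⟩ := IsFloerSolution.exists_half_le_norm hH c₀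
  induction k using Nat.strong_induction_on with
  | _ k ih =>
    match k with
    | 0 => exact ⟨1, fun i p hp => (h i).norm_le_one p hp⟩
    | 1 => exact ⟨c₀, fun i p hp => (h i).norm_pdt_le p hp⟩
    | m + 2 =>
      have hcover (i : ι) : strip (Ici (S i)) =
          strip (Ico (S i) (S i + δ / 4)) ∪ strip (Ici (S i + δ / 4)) := by
        rw [← union_prod, Ico_union_Ici_eq_Ici (by linarith)]
      have hz j (_ : 1 ≤ j) (hj : j ≤ m + 1) := ih j (by omega)
      have hunion := (uniformlyBounded_iterate_pdt_collar hH h hδ₀ hδ₁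
        (fun i => hδ _ _ _ (h i)) hz).union
        (uniformlyBounded_iterate_pdt_interior hH h hz (by linarith : 0 < δ / 4) (by linarith))
      simpa only [← hcover] using hunion

end FloerFamilies

section MixedDerivatives

variable {E : Type*} [NormedAddCommGroup E] [NormedSpace ℝ E] {A : Set (ℝ × ℝ)} {f : ℝ × ℝ → E}
  {p : ℝ × ℝ}

theorem norm_iteratedFDerivWithin_pdt_le (hA : UniqueDiffOn ℝ A)
    (hf : ContDiffOn ℝ (⊤ : ℕ∞) f A) (i : ℕ) (hp : p ∈ A) :
    ‖iteratedFDerivWithin ℝ i (pdt A f) A p‖ ≤ ‖iteratedFDerivWithin ℝ (i + 1) f A p‖ := by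
  have h := norm_iteratedFDerivWithin_clm_apply_const (c := ((0 : ℝ), (1 : ℝ))) (n := i)
    (((contDiffOn_infty_iff_fderivWithin hA).1 hf).2 p hp) hA hp (by exact_mod_cast le_top)
  rwa [norm_iteratedFDerivWithin_fderivWithin hA hp,
    show ‖((0 : ℝ), (1 : ℝ))‖ = 1 by simp [Prod.norm_def], one_mul] at h

theorem norm_iteratedFDerivWithin_iterate_pdt_le (hA : UniqueDiffOn ℝ A)
    (hf : ContDiffOn ℝ (⊤ : ℕ∞) f A) (i k : ℕ) (hp : p ∈ A) :
    ‖iteratedFDerivWithin ℝ i ((pdt A)^[k] f) A p‖ ≤ ‖iteratedFDerivWithin ℝ (i + k) f A p‖ := by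
  induction k generalizing i with
  | zero => exact le_rfl
  | succ k ih =>
    rw [Function.iterate_succ_apply', ← add_assoc, add_right_comm]
    exact (norm_iteratedFDerivWithin_pdt_le hA (contDiffOn_iterate_pdt hA hf k) i hp).trans
      (ih (i + 1))

theorem norm_iteratedFDerivWithin_succ_le (hA : UniqueDiffOn ℝ A)
    (hf : ContDiffOn ℝ (⊤ : ℕ∞) f A) (i : ℕ) (hp : p ∈ A) :
    ‖iteratedFDerivWithin ℝ (i + 1) f A p‖ ≤
      ‖iteratedFDerivWithin ℝ i (pds A f) A p‖ + ‖iteratedFDerivWithin ℝ i (pdt A f) A p‖ := by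
  let ds := ContinuousLinearMap.smulRightL ℝ (ℝ × ℝ) E (.fst ℝ ℝ ℝ)
  let dt := ContinuousLinearMap.smulRightL ℝ (ℝ × ℝ) E (.snd ℝ ℝ ℝ)
  have norm_le {c : ℝ × ℝ →L[ℝ] ℝ} (hc : ‖c‖ ≤ 1) :
      ‖ContinuousLinearMap.smulRightL ℝ (ℝ × ℝ) E c‖ ≤ 1 :=
    (ContinuousLinearMap.le_opNorm _ c).trans
      (mul_le_one₀ ContinuousLinearMap.norm_smulRightL_le (norm_nonneg c) hc)
  have hsplit : fderivWithin ℝ f A = ds ∘ pds A f + dt ∘ pdt A f := by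
    funext q
    ext <;> simp [ds, dt, pds, pdt]
  have hi : (i : WithTop ℕ∞) ≤ ((⊤ : ℕ∞) : WithTop ℕ∞) := by exact_mod_cast le_top
  have hs := contDiffOn_pds hA hf p hp
  have ht := contDiffOn_pdt hA hf p hp
  rw [← norm_iteratedFDerivWithin_fderivWithin hA hp, hsplit, iteratedFDerivWithin_add_apply
    ((ds.contDiff.comp_contDiffWithinAt hs).of_le hi)
    ((dt.contDiff.comp_contDiffWithinAt ht).of_le hi) hA hp]
  refine (norm_add_le _ _).trans (add_le_add ?_ ?_)
  · exact (ds.norm_iteratedFDerivWithin_comp_left hs hA hp hi).trans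
      (mul_le_of_le_one_left (norm_nonneg _) (norm_le (ContinuousLinearMap.norm_fst_le _ _ _)))
  · exact (dt.norm_iteratedFDerivWithin_comp_left ht hA hp hi).trans
      (mul_le_of_le_one_left (norm_nonneg _) (norm_le (ContinuousLinearMap.norm_snd_le _ _ _)))

end MixedDerivatives

section MixedFamilies

variable {ι E : Type*} [NormedAddCommGroup E] [NormedSpace ℝ E] [ProperSpace E]
  {A : ι → Set (ℝ × ℝ)} {L : E →L[ℝ] E} {G : ℝ × E → E} {τ : ι → ℝ} {z : ι → ℝ × ℝ → E}
  {p : ι → ℝ × ℝ} {l : Filter ι}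

theorem isBigO_iteratedFDerivWithin_pds_iterate_pdt (hG : IsSmoothPeriodic G)
    (hA : ∀ a, UniqueDiffOn ℝ (A a)) (hA' : ∀ a, A a ⊆ closure (interior (A a)))
    (hz : ∀ a, ContDiffOn ℝ (⊤ : ℕ∞) (z a) (A a))
    (hpds : ∀ a, EqOn (pds (A a) (z a)) (fun q => L (pdt (A a) (z a) q) + G (q.2 + τ a, z a q))
      (A a)) (hp : ∀ a, p a ∈ A a) (hball : ∀ a, ‖z a (p a)‖ ≤ 1) {i k : ℕ}
    (hpdt : (fun a => iteratedFDerivWithin ℝ i ((pdt (A a))^[k + 1] (z a)) (A a) (p a)) =O[l]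
      fun _ => (1 : ℝ))
    (hlow : ∀ j ≤ i + k, (fun a => iteratedFDerivWithin ℝ j (z a) (A a) (p a)) =O[l]
      fun _ => (1 : ℝ)) :
    (fun a => iteratedFDerivWithin ℝ i (pds (A a) ((pdt (A a))^[k] (z a))) (A a) (p a)) =O[l]
      fun _ => (1 : ℝ) := by
  have hGz a : ContDiffOn ℝ (⊤ : ℕ∞) (fun q => G (q.2 + τ a, z a q)) (A a) :=
    contDiffOn_comp_graph hG (τ a) (hz a)
  have hi : (i : WithTop ℕ∞) ≤ ((⊤ : ℕ∞) : WithTop ℕ∞) := by exact_mod_cast le_top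
  have hzt a := contDiffOn_iterate_pdt (hA a) (hz a) (k + 1) (p a) (hp a)
  have hsplit a : iteratedFDerivWithin ℝ i (pds (A a) ((pdt (A a))^[k] (z a))) (A a) (p a) =
      iteratedFDerivWithin ℝ i (L ∘ (pdt (A a))^[k + 1] (z a)) (A a) (p a) +
      iteratedFDerivWithin ℝ i ((pdt (A a))^[k] fun q => G (q.2 + τ a, z a q)) (A a) (p a) := by
    rw [iteratedFDerivWithin_congr
      (pds_iterate_pdt_of_eq (hA a) (hA' a) (hz a) (hGz a) (hpds a) k) (hp a)]
    exact iteratedFDerivWithin_add_apply ((L.contDiff.comp_contDiffWithinAt (hzt a)).of_le hi)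
      ((contDiffOn_iterate_pdt (hA a) (hGz a) k (p a) (hp a)).of_le hi) (hA a) (hp a)
  simp only [hsplit]
  refine .add ?_ ?_
  · exact (Asymptotics.IsBigO.of_bound ‖L‖ (.of_forall fun a =>
      L.norm_iteratedFDerivWithin_comp_left (hzt a) (hA a) (hp a) hi)).trans hpdt
  · exact (Asymptotics.isBigO_of_le l fun a =>
      norm_iteratedFDerivWithin_iterate_pdt_le (hA a) (hGz a) i k (hp a)).trans <|
      isBigO_iteratedFDerivWithin_comp_affine hG hA (.snd ℝ ℝ ℝ) τ hz hp hball fun j _ => hlow j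

theorem isBigO_iteratedFDerivWithin_iterate_pdt (hG : IsSmoothPeriodic G)
    (hA : ∀ a, UniqueDiffOn ℝ (A a)) (hA' : ∀ a, A a ⊆ closure (interior (A a)))
    (hz : ∀ a, ContDiffOn ℝ (⊤ : ℕ∞) (z a) (A a))
    (hpds : ∀ a, EqOn (pds (A a) (z a)) (fun q => L (pdt (A a) (z a) q) + G (q.2 + τ a, z a q))
      (A a)) (hp : ∀ a, p a ∈ A a) (hball : ∀ a, ‖z a (p a)‖ ≤ 1)
    (hpdt : ∀ k, (fun a => (pdt (A a))^[k] (z a) (p a)) =O[l] fun _ => (1 : ℝ)) (i k : ℕ) :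
    (fun a => iteratedFDerivWithin ℝ i ((pdt (A a))^[k] (z a)) (A a) (p a)) =O[l]
      fun _ => (1 : ℝ) := by
  obtain ⟨N, hN⟩ : ∃ N, i + k = N := ⟨_, rfl⟩
  induction N using Nat.strong_induction_on generalizing i k with
  | _ N ihN =>
    induction i generalizing k with
    | zero =>
      exact (Asymptotics.isBigO_of_le l fun a => norm_iteratedFDerivWithin_zero.le).trans (hpdt k)
    | succ i ihi =>
      have hzt := ihi (k + 1) (by omega)
      have hzs := isBigO_iteratedFDerivWithin_pds_iterate_pdt hG hA hA' hz hpds hp hball hzt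
        fun j hj => ihN j (by omega) j 0 rfl
      refine (Asymptotics.isBigO_of_le l fun a => ?_).trans (hzs.norm_left.add hzt.norm_left)
      rw [Real.norm_of_nonneg (by positivity), Function.iterate_succ_apply']
      exact norm_iteratedFDerivWithin_succ_le (hA a)
        (contDiffOn_iterate_pdt (hA a) (hz a) k) i (hp a)

end MixedFamilies

theorem uniformlyBounded_iteratedFDerivWithin {ι : Type*} {H : ℝ → ℂ → ℝ} (hH : IsAdmissible H)
    {c₀ : ℝ} {S τ : ι → ℝ} {z : ι → ℝ × ℝ → ℂ}
    (h : ∀ i, IsFloerSolution H c₀ (S i) (τ i) (z i)) (n : ℕ) :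
    UniformlyBounded (fun i => strip (Ici (S i)))
      fun i => iteratedFDerivWithin ℝ n (z i) (strip (Ici (S i))) := by
  rw [uniformlyBounded_iff_isBigO]
  let P := Σ i, strip (Ici (S i))
  have hP (x : P) : (x.2 : ℝ × ℝ) ∈ strip (Ici (S x.1)) := x.2.2
  exact isBigO_iteratedFDerivWithin_iterate_pdt (isSmoothPeriodic_floerForcing hH)
    (fun _ => uniqueDiffOn_strip (uniqueDiffOn_Ici _))
    (fun _ => strip_subset_closure_interior (by rw [interior_Ici, closure_Ioi]))
    (fun x => (h x.1).contDiffOn) (fun x => (h x.1).pds_eqOn) hP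
    (fun x => (h x.1).norm_le_one _ (hP x))
    (fun k => uniformlyBounded_iff_isBigO.1 (uniformlyBounded_iterate_pdt hH h k)) n 0

theorem uniform_higher_derivative_bounds_general (H : ℝ → ℂ → ℝ) (hH : IsAdmissible H) (c₀ : ℝ) :
    ∃ c : ℕ → ℝ, (∀ k, 0 < c k) ∧ ∀ S τ₀ z, IsFloerSolution H c₀ S τ₀ z → ∀ k,
      ∀ p ∈ HalfPlaneFrom S, ‖iteratedFDerivWithin ℝ k z (HalfPlaneFrom S) p‖ ≤ c k := by
  choose C hC using uniformlyBounded_iteratedFDerivWithin hH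
    fun x : {x : ℝ × ℝ × (ℝ × ℝ → ℂ) // IsFloerSolution H c₀ x.1 x.2.1 x.2.2} => x.2
  exact ⟨fun k => |C k| + 1, fun k => by positivity, fun S τ₀ z h k p hp =>
    (hC k ⟨(S, τ₀, z), h⟩ p hp).trans ((le_abs_self _).trans (lt_add_one _).le)⟩

/-- **Uniform `C^∞`-bounds from gradient bounds (after Hofer).**  Given `H` and a
constant `c₀ > 0`, there are constants `c_k > 0`, depending only on `H` and `c₀`,
bounding all partial derivatives of total order `k+1` of every periodic solution of
the Floer equation on a half plane `[S,∞) × ℝ` with unit-circle boundary values and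
gradient bounded by `c₀`. -/
theorem uniform_higher_derivative_bounds
    (H : ℝ → ℂ → ℝ) (hH : IsAdmissible H) (c₀ : ℝ) (hc₀ : 0 < c₀) :
    ∃ c : ℕ → ℝ, (∀ k, 0 < c k) ∧
      ∀ (n : ℕ), 1 ≤ n → ∀ (S τ₀ : ℝ), S ≤ 0 →
        ∀ z : ℝ × ℝ → ℂ,
          ContDiffOn ℝ (⊤ : ℕ∞) z (HalfPlaneFrom S) →
          (∀ p ∈ HalfPlaneFrom S, z p ∈ Disk) →
          (∀ s t : ℝ, S ≤ s → z (s, t + n) = z (s, t)) →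
          (∀ p ∈ HalfPlaneFrom S,
            pds (HalfPlaneFrom S) z p +
              Complex.I * (pdt (HalfPlaneFrom S) z p - XH H (p.2 + τ₀) (z p)) = 0) →
          (∀ t : ℝ, ‖z (S, t)‖ = 1) →
          (∀ p ∈ HalfPlaneFrom S,
            ‖pds (HalfPlaneFrom S) z p‖ ≤ c₀ ∧ ‖pdt (HalfPlaneFrom S) z p‖ ≤ c₀) →
          ∀ k : ℕ, 1 ≤ k → ∀ p ∈ HalfPlaneFrom S,
            ∀ v : Fin (k + 1) → ℝ × ℝ,
              (∀ j, v j = ((1:ℝ), (0:ℝ)) ∨ v j = ((0:ℝ), (1:ℝ))) →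
              ‖iteratedFDerivWithin ℝ (k + 1) z (HalfPlaneFrom S) p v‖ ≤ c k := by
  obtain ⟨c, hc_pos, hc⟩ := uniform_higher_derivative_bounds_general H hH c₀
  refine ⟨fun k => c (k + 1), fun k => hc_pos (k + 1), ?_⟩
  intro n _ S τ₀ _ z hz hdisk _ hfloer hbdry hgrad k _ p hp v hv
  have hsol : IsFloerSolution H c₀ S τ₀ z :=
    ⟨hz, fun p hp => mem_closedBall_zero_iff.1 (hdisk p hp), hfloer, hbdry,
      fun p hp => (hgrad p hp).2⟩
  have hnorm j : ‖v j‖ = 1 := by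
    rcases hv j with h | h <;> rw [h] <;> simp [Prod.norm_def]
  calc ‖iteratedFDerivWithin ℝ (k + 1) z (HalfPlaneFrom S) p v‖
      ≤ ‖iteratedFDerivWithin ℝ (k + 1) z (HalfPlaneFrom S) p‖ * ∏ j, ‖v j‖ :=
        ContinuousMultilinearMap.le_opNorm _ v
    _ = ‖iteratedFDerivWithin ℝ (k + 1) z (HalfPlaneFrom S) p‖ := by
        simp only [hnorm, Finset.prod_const_one, mul_one]
    _ ≤ c (k + 1) := hc S τ₀ z hsol (k + 1) p hp
end
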